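/- $\sum_{n=1}^{\infty} \frac{1}{n^2 \binom{2n}{n}}\left(8 \sum_{j=1}^{n} \frac{(-1)^j}{j^4} + \frac{(-1)^n}{n^4}\right) = -\frac{22\,\zeta(3)^2}{15} - \frac{97\pi^6}{34020}$. -/

import Mathlib

open Filter Topology

/-- Alternating harmonic-type sum `∑_{j=1}^n (-1)^j / j^s`. -/
noncomputable def A (s n : ℕ) : ℝ := ∑ j ∈ Finset.range n, (-1:ℝ)^(j+1) / ((j:ℝ) + 1) ^ s

/-- The Riemann zeta value `ζ(s) = ∑_{n ≥ 1} 1/n^s`. -/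
noncomputable def zeta (s : ℕ) : ℝ := ∑' n : ℕ, 1 / ((n:ℝ) + 1) ^ s

namespace WZ
open PowerSeries Finset

noncomputable section

/-- linear power series `k + x X` -/
def lin (k x : ℝ) : PowerSeries ℝ := C k + C x * X
def pr (k x : ℝ) (n : ℕ) : PowerSeries ℝ := ∏ i ∈ range n, lin ((i:ℝ) + k) x
def ipr (k x : ℝ) (n : ℕ) : PowerSeries ℝ := ∏ i ∈ range n, (lin ((i:ℝ) + k) x)⁻¹

/-- truncated weighted norm -/
def nm (r : ℝ) (f : PowerSeries ℝ) : ℝ := ∑ i ∈ range 7, |coeff i f| * r ^ i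

lemma nm_nonneg {r : ℝ} (hr : 0 ≤ r) (f : PowerSeries ℝ) : 0 ≤ nm r f :=
  Finset.sum_nonneg fun _ _ => mul_nonneg (abs_nonneg _) (pow_nonneg hr _)

lemma nm_add {r : ℝ} (hr : 0 ≤ r) (f g : PowerSeries ℝ) : nm r (f + g) ≤ nm r f + nm r g := by
  unfold nm
  rw [← Finset.sum_add_distrib]
  refine Finset.sum_le_sum fun i _ => ?_
  rw [← add_mul, map_add]
  exact mul_le_mul_of_nonneg_right (abs_add_le _ _) (pow_nonneg hr _)

lemma nm_sum {ι : Type*} {r : ℝ} (hr : 0 ≤ r) (s : Finset ι) (f : ι → PowerSeries ℝ) :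
    nm r (∑ i ∈ s, f i) ≤ ∑ i ∈ s, nm r (f i) := by
  classical
  induction s using Finset.induction_on with
  | empty => simp [nm]
  | insert a s ha ih =>
    rw [Finset.sum_insert ha, Finset.sum_insert ha]
    exact (nm_add hr _ _).trans (by linarith)

lemma nm_mul {r : ℝ} (hr : 0 ≤ r) (f g : PowerSeries ℝ) : nm r (f * g) ≤ nm r f * nm r g := by
  unfold nm
  have h1 : ∀ i ∈ range 7, |coeff i (f * g)| * r ^ i ≤
      ∑ p ∈ antidiagonal i, (|coeff p.1 f| * r ^ p.1) * (|coeff p.2 g| * r ^ p.2) := by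
    intro i _
    rw [coeff_mul]
    calc |∑ p ∈ antidiagonal i, coeff p.1 f * coeff p.2 g| * r ^ i
        ≤ (∑ p ∈ antidiagonal i, |coeff p.1 f * coeff p.2 g|) * r ^ i :=
          mul_le_mul_of_nonneg_right (Finset.abs_sum_le_sum_abs _ _) (pow_nonneg hr _)
      _ = _ := by
          rw [Finset.sum_mul]
          refine Finset.sum_congr rfl fun p hp => ?_
          rw [← (Finset.HasAntidiagonal.mem_antidiagonal.mp hp), abs_mul, pow_add]; ring
  refine (Finset.sum_le_sum h1).trans ?_
  rw [Finset.sum_mul_sum, ← Finset.sum_product', Finset.sum_sigma']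
  have : ∀ s t : Finset (ℕ × ℕ), s ⊆ t →
     ∑ p ∈ s, (|coeff p.1 f| * r ^ p.1) * (|coeff p.2 g| * r ^ p.2) ≤
     ∑ p ∈ t, (|coeff p.1 f| * r ^ p.1) * (|coeff p.2 g| * r ^ p.2) := by
    intro s t h
    refine Finset.sum_le_sum_of_subset_of_nonneg h fun i _ _ => ?_
    positivity
  refine le_trans (le_of_eq ?_) (this ((range 7 ×ˢ range 7).filter (fun p => p.1 + p.2 < 7)) _
    (filter_subset _ _))
  refine Finset.sum_bij' (fun x _ => x.2) (fun p _ => ⟨p.1 + p.2, p⟩) ?_ ?_ ?_ ?_ ?_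
  · rintro ⟨i, p⟩ h
    simp only [mem_sigma, mem_range, Finset.HasAntidiagonal.mem_antidiagonal, mem_filter, mem_product] at h ⊢
    omega
  · rintro p h
    simp only [mem_sigma, mem_range, Finset.HasAntidiagonal.mem_antidiagonal, mem_filter, mem_product] at h ⊢
    exact ⟨h.2, by trivial⟩
  · rintro ⟨i, p⟩ h
    simp only [mem_sigma, mem_range, Finset.HasAntidiagonal.mem_antidiagonal] at h
    obtain ⟨_, rfl⟩ := h
    rfl
  · rintro p h; rfl
  · rintro p h; rfl

lemma nm_C (r c : ℝ) : nm r (C c) = |c| := by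
  unfold nm
  simp [Finset.sum_range_succ, coeff_C]

lemma nm_C_mul {r : ℝ} (hr : 0 ≤ r) (c : ℝ) (f : PowerSeries ℝ) :
    nm r (C c * f) ≤ |c| * nm r f := by
  have := nm_mul hr (C c) f
  rwa [nm_C] at this

lemma nm_X (r : ℝ) : nm r X = r := by
  unfold nm
  simp [Finset.sum_range_succ, coeff_X]

lemma abs_coeff_le {r : ℝ} (hr : 0 < r) (f : PowerSeries ℝ) {i : ℕ} (hi : i < 7) :
    |coeff i f| ≤ nm r f / r ^ i := by
  rw [le_div_iff₀ (pow_pos hr _)]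
  exact Finset.single_le_sum (f := fun i => |coeff i f| * r ^ i)
    (fun j _ => mul_nonneg (abs_nonneg _) (pow_nonneg hr.le _)) (mem_range.mpr hi)

lemma tendsto_coeff_zero {r : ℝ} (hr : 0 < r) (f : ℕ → PowerSeries ℝ)
    (h : Tendsto (fun n => nm r (f n)) atTop (𝓝 0)) {i : ℕ} (hi : i < 7) :
    Tendsto (fun n => coeff i (f n)) atTop (𝓝 0) := by
  have := h.div_const (r ^ i)
  rw [zero_div] at this
  exact squeeze_zero_norm (fun n => by simpa using abs_coeff_le hr (f n) hi) this

lemma constCoeff_lin (k x : ℝ) : constantCoeff (lin k x) = k := by simp [lin]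

lemma lin_mul_inv {k : ℝ} (hk : k ≠ 0) (x : ℝ) : lin k x * (lin k x)⁻¹ = 1 :=
  PowerSeries.mul_inv_cancel _ (by rwa [constCoeff_lin])

lemma nm_lin {r : ℝ} (hr : 0 ≤ r) (k x : ℝ) : nm r (lin k x) ≤ |k| + |x| * r := by
  refine (nm_add hr _ _).trans ?_
  rw [nm_C]
  have := nm_C_mul hr x X
  rw [nm_X] at this
  linarith

lemma nm_lin_inv {r : ℝ} (hr : 0 ≤ r) (k x : ℝ) (h : |x| * r < k) :
    nm r (lin k x)⁻¹ ≤ 1 / (k - |x| * r) := by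
  have hk : 0 < k := lt_of_le_of_lt (by positivity) h
  have h1 := lin_mul_inv hk.ne' x
  set u := (lin k x)⁻¹
  have h2 : C k * u = 1 + C (-x) * (X * u) := by
    rw [← h1, lin, map_neg]; ring
  have h3 : u = C (1/k) * (1 + C (-x) * (X * u)) := by
    rw [← h2, ← mul_assoc, ← map_mul, one_div, inv_mul_cancel₀ hk.ne', map_one, one_mul]
  have h4 : nm r u ≤ |1/k| * (1 + |x| * (r * nm r u)) := by
    calc nm r u = nm r (C (1/k) * (1 + C (-x) * (X * u))) := by rw [← h3]
      _ ≤ |1/k| * nm r (1 + C (-x) * (X * u)) := nm_C_mul hr _ _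
      _ ≤ _ := by
        refine mul_le_mul_of_nonneg_left ?_ (abs_nonneg _)
        refine (nm_add hr _ _).trans ?_
        have e1 : nm r (1 : PowerSeries ℝ) = 1 := by
          have := nm_C r 1; simpa using this
        have e2 := nm_C_mul hr (-x) (X * u)
        have e3 := nm_mul hr X u
        rw [nm_X] at e3
        rw [abs_neg] at e2
        rw [e1]
        have := mul_le_mul_of_nonneg_left e3 (abs_nonneg x)
        linarith
  rw [abs_of_pos (by positivity), one_div, inv_mul_eq_div, le_div_iff₀ hk] at h4
  rw [le_div_iff₀ (by linarith)]
  nlinarith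

/-- loss factor -/
def ls (θ : ℝ) (n : ℕ) : ℝ := ∏ i ∈ range n, ((1 + θ / ((i:ℝ) + 1)) / (1 - θ / ((i:ℝ) + 1)))

lemma ls_fac {θ : ℝ} (h0 : 0 ≤ θ) (h1 : θ < 1) (i : ℕ) :
    1 ≤ (1 + θ / ((i:ℝ) + 1)) / (1 - θ / ((i:ℝ) + 1)) := by
  have hi : (0:ℝ) < (i:ℝ) + 1 := by positivity
  have h2 : θ / ((i:ℝ) + 1) < 1 := by
    rw [div_lt_one hi]; have : (0:ℝ) ≤ i := by positivity
    linarith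
  have h3 : 0 ≤ θ / ((i:ℝ) + 1) := by positivity
  rw [le_div_iff₀ (by linarith)]; linarith

lemma ls_mono {θ : ℝ} (h0 : 0 ≤ θ) (h1 : θ < 1) {m n : ℕ} (h : m ≤ n) : ls θ m ≤ ls θ n :=
  Finset.prod_le_prod_of_subset_of_one_le (range_mono h)
    (fun i _ => zero_le_one.trans (ls_fac h0 h1 i)) (fun i _ _ => ls_fac h0 h1 i)

lemma one_le_ls {θ : ℝ} (h0 : 0 ≤ θ) (h1 : θ < 1) (n : ℕ) : 1 ≤ ls θ n := by
  simpa [ls] using ls_mono h0 h1 (Nat.zero_le n)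

/-- scalar Pochhammer -/
def ph (k : ℝ) (n : ℕ) : ℝ := ∏ i ∈ range n, ((i:ℝ) + k)

lemma ph_pos {k : ℝ} (hk : 0 < k) (n : ℕ) : 0 < ph k n :=
  Finset.prod_pos fun i _ => by positivity

lemma nm_one (r : ℝ) : nm r (1 : PowerSeries ℝ) = 1 := by
  have := nm_C r 1; simpa using this

lemma nm_pr {r θ k x : ℝ} (hr : 0 ≤ r) (h0 : 0 ≤ θ) (h1 : θ < 1) (hk : 1/2 ≤ k)
    (hx : 2 * (|x| * r) ≤ θ) (n : ℕ) : nm r (pr k x n) ≤ ph k n * ls θ n := by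
  induction n with
  | zero => simp [pr, ph, ls, nm_one]
  | succ n ih =>
    have e1 : pr k x (n+1) = pr k x n * lin ((n:ℝ)+k) x := by simp [pr, Finset.prod_range_succ]
    have e2 : ph k (n+1) = ph k n * ((n:ℝ)+k) := by simp [ph, Finset.prod_range_succ]
    have e3 : ls θ (n+1) = ls θ n * ((1 + θ / ((n:ℝ) + 1)) / (1 - θ / ((n:ℝ) + 1))) := by
      unfold ls; rw [Finset.prod_range_succ]
    rw [e1, e2, e3]
    have hn : (0:ℝ) ≤ n := by positivity
    have hn1 : (0:ℝ) < (n:ℝ) + 1 := by positivity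
    have h2 : θ / ((n:ℝ) + 1) < 1 := by rw [div_lt_one hn1]; linarith
    have h3 : 0 ≤ θ / ((n:ℝ) + 1) := by positivity
    have h4 : nm r (lin ((n:ℝ)+k) x) ≤ ((n:ℝ)+k) * ((1 + θ / ((n:ℝ) + 1)) / (1 - θ / ((n:ℝ) + 1))) := by
      refine (nm_lin hr _ _).trans ?_
      rw [abs_of_nonneg (by linarith)]
      have h5 : 1 + θ / ((n:ℝ) + 1) ≤ (1 + θ / ((n:ℝ) + 1)) / (1 - θ / ((n:ℝ) + 1)) := by
        rw [le_div_iff₀ (by linarith)]; nlinarith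
      refine le_trans ?_ (mul_le_mul_of_nonneg_left h5 (by linarith))
      have : θ / 2 ≤ (n + k) * (θ / ((n:ℝ) + 1)) := by
        rw [mul_div_assoc', div_le_div_iff₀ (by norm_num) hn1]; nlinarith
      linarith
    calc _ ≤ nm r (pr k x n) * nm r (lin ((n:ℝ)+k) x) := nm_mul hr _ _
      _ ≤ (ph k n * ls θ n) * (((n:ℝ)+k) * ((1 + θ / ((n:ℝ) + 1)) / (1 - θ / ((n:ℝ) + 1)))) :=
        mul_le_mul ih h4 (nm_nonneg hr _) ((nm_nonneg hr _).trans ih)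
      _ = _ := by ring

lemma nm_ipr {r θ k x : ℝ} (hr : 0 ≤ r) (h0 : 0 ≤ θ) (h1 : θ < 1) (hk : 1/2 ≤ k)
    (hx : 2 * (|x| * r) ≤ θ) (n : ℕ) : nm r (ipr k x n) ≤ ls θ n / ph k n := by
  induction n with
  | zero => simp [ipr, ph, ls, nm_one]
  | succ n ih =>
    have e1 : ipr k x (n+1) = ipr k x n * (lin ((n:ℝ)+k) x)⁻¹ := by simp [ipr, Finset.prod_range_succ]
    have e2 : ph k (n+1) = ph k n * ((n:ℝ)+k) := by simp [ph, Finset.prod_range_succ]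
    have e3 : ls θ (n+1) = ls θ n * ((1 + θ / ((n:ℝ) + 1)) / (1 - θ / ((n:ℝ) + 1))) := by
      unfold ls; rw [Finset.prod_range_succ]
    rw [e1, e2, e3]
    have hn : (0:ℝ) ≤ n := by positivity
    have hn1 : (0:ℝ) < (n:ℝ) + 1 := by positivity
    have h2 : θ / ((n:ℝ) + 1) < 1 := by rw [div_lt_one hn1]; linarith
    have h3 : 0 ≤ θ / ((n:ℝ) + 1) := by positivity
    have h4 : nm r (lin ((n:ℝ)+k) x)⁻¹ ≤ ((1 + θ / ((n:ℝ) + 1)) / (1 - θ / ((n:ℝ) + 1))) / ((n:ℝ)+k) := by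
      refine (nm_lin_inv hr _ _ (by linarith)).trans ?_
      have : θ / 2 ≤ (n + k) * (θ / ((n:ℝ) + 1)) := by
        rw [mul_div_assoc', div_le_div_iff₀ (by norm_num) hn1]; nlinarith
      have h6 : 1 / (1 - θ / ((n:ℝ) + 1)) ≤ (1 + θ / ((n:ℝ) + 1)) / (1 - θ / ((n:ℝ) + 1)) :=
        div_le_div_of_nonneg_right (by linarith) (by linarith)
      refine le_trans ?_ (div_le_div_of_nonneg_right h6 (by linarith))
      rw [div_div]
      refine one_div_le_one_div_of_le (mul_pos (by linarith) (by linarith)) ?_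
      linarith
    calc _ ≤ nm r (ipr k x n) * nm r (lin ((n:ℝ)+k) x)⁻¹ := nm_mul hr _ _
      _ ≤ (ls θ n / ph k n) * (((1 + θ / ((n:ℝ) + 1)) / (1 - θ / ((n:ℝ) + 1))) / ((n:ℝ)+k)) :=
        mul_le_mul ih h4 (nm_nonneg hr _) ((nm_nonneg hr _).trans ih)
      _ = _ := by rw [div_mul_div_comm]

lemma ls_pow {θ : ℝ} (J : ℕ) (hJ : 1 ≤ J) (h0 : 0 ≤ θ) (h1 : θ * (4 * J) ≤ 1) (n : ℕ) :
    ls θ n ^ J ≤ (n:ℝ) + 1 := by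
  induction n with
  | zero => simp [ls]
  | succ n ih =>
    have e3 : ls θ (n+1) = ls θ n * ((1 + θ / ((n:ℝ) + 1)) / (1 - θ / ((n:ℝ) + 1))) := by
      unfold ls; rw [Finset.prod_range_succ]
    have hJ' : (1:ℝ) ≤ J := by exact_mod_cast hJ
    have hθ : θ ≤ 1/4 := by nlinarith
    have hn1 : (0:ℝ) < (n:ℝ) + 1 := by positivity
    have hn : (0:ℝ) ≤ n := by positivity
    set y := θ / ((n:ℝ) + 1) with hy
    have h3 : 0 ≤ y := by positivity
    have h2 : y ≤ 1/4 := by rw [hy, div_le_iff₀ hn1]; nlinarith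
    have hD : 0 < (1 + y) / (1 - y) := div_pos (by linarith) (by linarith)
    have key : ((n:ℝ)+1)/((n:ℝ)+2) ≤ ((1 - y)/(1 + y))^J := by
      have a1 : 1 - 2*y ≤ (1-y)/(1+y) := by rw [le_div_iff₀ (by linarith)]; nlinarith
      have a2 := one_add_mul_le_pow (a := -(2*y)) (by linarith) J
      have a3 : (1 + -(2*y))^J ≤ ((1 - y)/(1 + y))^J := pow_le_pow_left₀ (by linarith) (by linarith) _
      refine le_trans ?_ (a2.trans a3)
      have a4 : J * y ≤ 1/(4*((n:ℝ)+1)) := by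
        rw [hy, mul_div_assoc', div_le_div_iff₀ hn1 (by positivity)]; nlinarith
      have a5 : ((n:ℝ)+1)/((n:ℝ)+2) ≤ 1 - 2 * (1/(4*((n:ℝ)+1))) := by
        rw [div_le_iff₀ (by positivity)]; field_simp; nlinarith
      linarith
    rw [e3, mul_pow]
    have : ((1 + y) / (1 - y))^J ≤ ((n:ℝ)+2)/((n:ℝ)+1) := by
      have e : (1 + y) / (1 - y) = ((1 - y)/(1 + y))⁻¹ := by rw [inv_div]
      rw [e, inv_pow]
      have := inv_anti₀ (by positivity) key
      rwa [inv_div] at this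
    calc _ ≤ ((n:ℝ)+1) * (((n:ℝ)+2)/((n:ℝ)+1)) := mul_le_mul ih this (by positivity) (by positivity)
      _ = _ := by field_simp; push_cast; ring

end
end WZ

namespace WZ
open PowerSeries Finset

noncomputable section

/-- `s` is the logarithmic derivative of `f` -/
def LD (f s : PowerSeries ℝ) : Prop := derivative ℝ f = f * s

lemma LD.mul {f g s t : PowerSeries ℝ} (h1 : LD f s) (h2 : LD g t) : LD (f * g) (s + t) := by
  unfold LD at *
  rw [Derivation.leibniz, h1, h2, smul_eq_mul, smul_eq_mul]; ring

lemma LD.const (c : ℝ) : LD (C c) 0 := by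
  unfold LD; simp

lemma LD.one : LD 1 0 := by
  unfold LD; simp

lemma LD.C_mul {f s : PowerSeries ℝ} (h : LD f s) (c : ℝ) : LD (C c * f) s := by
  have := (LD.const c).mul h
  rwa [zero_add] at this

/-- logarithmic derivative of a linear factor -/
def gs (k x : ℝ) : PowerSeries ℝ := C x * (lin k x)⁻¹

lemma LD_lin {k : ℝ} (hk : k ≠ 0) (x : ℝ) : LD (lin k x) (gs k x) := by
  unfold LD gs
  rw [mul_left_comm, lin_mul_inv hk, mul_one]
  simp [lin]

lemma LD_inv_lin {k : ℝ} (hk : k ≠ 0) (x : ℝ) : LD (lin k x)⁻¹ (-gs k x) := by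
  have h1 := lin_mul_inv hk x
  have h2 : LD (lin k x) (gs k x) := LD_lin hk x
  unfold LD at *
  have h3 := congrArg (derivative ℝ) h1
  rw [Derivation.leibniz, h2, smul_eq_mul, smul_eq_mul] at h3
  have h4 : derivative ℝ (1 : PowerSeries ℝ) = 0 := by simp
  rw [h4] at h3
  set u := (lin k x)⁻¹
  set D := derivative ℝ u
  have : D = u * (lin k x * D) := by rw [← mul_assoc, mul_comm u, h1, one_mul]
  rw [this, eq_neg_of_add_eq_zero_left h3]
  linear_combination (-u * gs k x) * h1

lemma LD_pr {k : ℝ} (hk : 0 < k) (x : ℝ) (n : ℕ) :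
    LD (pr k x n) (∑ i ∈ range n, gs ((i:ℝ) + k) x) := by
  induction n with
  | zero => simpa [pr] using LD.one
  | succ n ih =>
    rw [Finset.sum_range_succ, pr, Finset.prod_range_succ]
    exact LD.mul ih (LD_lin (by positivity) x)

lemma LD_ipr {k : ℝ} (hk : 0 < k) (x : ℝ) (n : ℕ) :
    LD (ipr k x n) (-∑ i ∈ range n, gs ((i:ℝ) + k) x) := by
  induction n with
  | zero => simpa [ipr] using LD.one
  | succ n ih =>
    rw [Finset.sum_range_succ, ipr, Finset.prod_range_succ, neg_add]
    exact LD.mul ih (LD_inv_lin (by positivity) x)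

lemma coeff_gs {k : ℝ} (hk : k ≠ 0) (x : ℝ) (j : ℕ) :
    coeff j (gs k x) = (-1)^j * x^(j+1) / k^(j+1) := by
  have h : gs k x = PowerSeries.mk (fun j : ℕ => (-1)^j * x^(j+1) / k^(j+1)) := by
    have h1 := lin_mul_inv hk x
    set M := PowerSeries.mk (fun j : ℕ => (-1)^j * x^(j+1) / k^(j+1)) with hM
    have h2 : lin k x * M = C x := by
      ext n
      cases n with
      | zero => simp [lin, add_mul, mul_assoc, hM, coeff_C]; field_simp
      | succ n =>
        simp only [lin, add_mul, mul_assoc, hM, map_add, coeff_C_mul, coeff_succ_X_mul, coeff_mk,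
          coeff_C]
        field_simp
        simp
        ring
    rw [gs, ← h2, mul_comm, ← mul_assoc, mul_comm (lin k x)⁻¹, h1, one_mul]
  rw [h, coeff_mk]

/-- shifted harmonic numbers -/
def hs (k : ℝ) (j n : ℕ) : ℝ := ∑ i ∈ range n, 1 / ((i:ℝ) + k)^j

lemma coeff_sum_gs {k : ℝ} (hk : 0 < k) (x : ℝ) (n j : ℕ) :
    coeff j (∑ i ∈ range n, gs ((i:ℝ) + k) x) = (-1)^j * x^(j+1) * hs k (j+1) n := by
  rw [map_sum, hs, Finset.mul_sum]
  refine Finset.sum_congr rfl fun i _ => ?_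
  rw [coeff_gs (by positivity), mul_one_div]

lemma LD_coeff {f s : PowerSeries ℝ} (h : LD f s) (n : ℕ) :
    coeff (n+1) f * ((n:ℝ)+1) = ∑ i ∈ range (n+1), coeff i f * coeff (n-i) s := by
  unfold LD at h
  have := congrArg (coeff n) h
  rw [coeff_derivative, coeff_mul, Finset.Nat.sum_antidiagonal_eq_sum_range_succ_mk] at this
  exact this

lemma LD_coeff1 {f s : PowerSeries ℝ} (h : LD f s) : coeff 1 f = coeff 0 f * coeff 0 s := by
  have := LD_coeff h 0
  norm_num only [Finset.sum_range_succ, Finset.sum_range_zero, Nat.cast_ofNat, Nat.cast_zero] at this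
  linear_combination this

lemma LD_coeff2 {f s : PowerSeries ℝ} (h : LD f s) :
    coeff 2 f = coeff 0 f * ((coeff 1 s + coeff 0 s ^ 2) / 2) := by
  have := LD_coeff h 1
  norm_num only [Finset.sum_range_succ, Finset.sum_range_zero, Nat.cast_ofNat, Nat.cast_one] at this
  rw [LD_coeff1 h] at this
  linear_combination this / 2

lemma LD_coeff3 {f s : PowerSeries ℝ} (h : LD f s) :
    coeff 3 f = coeff 0 f * ((2 * coeff 2 s + 3 * coeff 0 s * coeff 1 s + coeff 0 s ^ 3) / 6) := by
  have := LD_coeff h 2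
  norm_num only [Finset.sum_range_succ, Finset.sum_range_zero, Nat.cast_ofNat] at this
  rw [LD_coeff1 h, LD_coeff2 h] at this
  linear_combination this / 3

lemma LD_coeff4 {f s : PowerSeries ℝ} (h : LD f s) :
    coeff 4 f = coeff 0 f * ((6 * coeff 3 s + 8 * coeff 0 s * coeff 2 s + 3 * coeff 1 s ^ 2 +
      6 * coeff 0 s ^ 2 * coeff 1 s + coeff 0 s ^ 4) / 24) := by
  have := LD_coeff h 3
  norm_num only [Finset.sum_range_succ, Finset.sum_range_zero, Nat.cast_ofNat] at this
  rw [LD_coeff1 h, LD_coeff2 h, LD_coeff3 h] at this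
  linear_combination this / 4

lemma LD_coeff6 {f s : PowerSeries ℝ} (h : LD f s) (h0 : coeff 0 s = 0) :
    coeff 6 f = coeff 0 f * (coeff 5 s / 6 + coeff 1 s * coeff 3 s / 8 + coeff 2 s ^ 2 / 18 +
      coeff 1 s ^ 3 / 48) := by
  have a6 := LD_coeff h 5
  norm_num only [Finset.sum_range_succ, Finset.sum_range_zero, Nat.cast_ofNat] at a6
  rw [LD_coeff1 h, LD_coeff2 h, LD_coeff3 h, LD_coeff4 h, h0] at a6
  linear_combination a6 / 6

end
end WZ

namespace WZ
open PowerSeries Finset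

noncomputable section

lemma pr_succ (k x : ℝ) (n : ℕ) : pr k x (n+1) = pr k x n * lin ((n:ℝ)+k) x := by
  unfold pr; rw [Finset.prod_range_succ]
lemma ipr_succ (k x : ℝ) (n : ℕ) : ipr k x (n+1) = ipr k x n * (lin ((n:ℝ)+k) x)⁻¹ := by
  unfold ipr; rw [Finset.prod_range_succ]
lemma ph_succ (k : ℝ) (n : ℕ) : ph k (n+1) = ph k n * ((n:ℝ)+k) := by
  unfold ph; rw [Finset.prod_range_succ]

lemma lam_id {R : Type*} [CommRing R] (b e c d : R) :
    c^2*d^2*((c+d-b-e)*(c+d-b-e-1))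
      - (c*d*(b+e)-b*e*(c+d))*((c+d-b-e-1)*(c^2+d^2) - (b*e+c*d-(b+e)*(c+d))
        - (c*d*(b+e)-b*e*(c+d))) + (c+d-b-e)*(b*e*c*d)
    = (c-b)*(d-b)*(c-e)*(d-e)*(c+d-1)*(c+d) := by
  ring

/-- the certificate coefficient -/
def nu (ks is b e c d : PowerSeries ℝ) : PowerSeries ℝ :=
  is * (c^2+d^2 + ks*((b*e+c*d-(b+e)*(c+d)) + (c*d*(b+e)-b*e*(c+d))))

lemma poly_id (ks is b e c d n lam s : PowerSeries ℝ) (hs : s = c+d-b-e)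
    (h1 : ks * (s - 1) = -1) (h2 : is * s = 1)
    (hl : lam = -(ks * is * ((c-b)*(d-b)*(c-e)*(d-e)*(c+d-1)*(c+d)))) :
    2*n*((n-c)*(n-d)*(n+c)*(n+d)) = 2*n*lam
      + (ks*(n^2+n)+nu ks is b e c d)*((n+b)*(n+e)*(n-c)*(n-d))
      - (ks*(n^2-n)+nu ks is b e c d)*((n-b)*(n-e)*(n+c)*(n+d)) := by
  have hl2 : lam = c^2*d^2 - nu ks is b e c d * (c*d*(b+e)-b*e*(c+d)) - ks*(b*e*c*d) := by
    rw [hl, ← lam_id, nu, ← hs]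
    linear_combination (c^2*d^2 * (-1) + is * (c*d*(b+e)-b*e*(c+d))*(c^2+d^2)
       - c^2*d^2*(is*s - 1)) * h1 - (ks * (b*e*c*d) - c^2*d^2) * h2
  have hn : nu ks is b e c d * s = c^2+d^2 + ks*((b*e+c*d-(b+e)*(c+d)) + (c*d*(b+e)-b*e*(c+d))) := by
    rw [nu]; linear_combination (c^2+d^2 + ks*((b*e+c*d-(b+e)*(c+d)) + (c*d*(b+e)-b*e*(c+d)))) * h2
  rw [hl2]
  generalize nu ks is b e c d = v at *
  subst hs
  linear_combination (2*n^5) * h1 + (2*n^3) * hn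

/-- abstract step -/
lemma step_id (ks is b e c d n lam s U ub ue uc ud : PowerSeries ℝ) (hs : s = c+d-b-e)
    (h1 : ks * (s - 1) = -1) (h2 : is * s = 1)
    (hl : lam = -(ks * is * ((c-b)*(d-b)*(c-e)*(d-e)*(c+d-1)*(c+d))))
    (hb : (n-b)*ub = 1) (he : (n-e)*ue = 1) (hc : (n+c)*uc = 1) (hd : (n+d)*ud = 1) :
    U*(2*n*ub*(n-c)*(n-d)*ue) = U*(lam*(2*n)*ub*uc*ud*ue)
      + U*((ks*(n^2+n)+nu ks is b e c d)*((n+b)*(n+e)*(n-c)*(n-d))*ub*ue*uc*ud)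
      - U*(ks*(n^2-n)+nu ks is b e c d) := by
  have hp := poly_id ks is b e c d n lam s hs h1 h2 hl
  generalize nu ks is b e c d = v at *
  have hcd : (n+c)*uc*((n+d)*ud) = 1 := by rw [hc, hd, one_mul]
  have hall : (n-b)*ub*((n-e)*ue)*((n+c)*uc*((n+d)*ud)) = 1 := by rw [hb, he, hcd]; ring
  linear_combination (U*ub*ue*uc*ud)*hp - (U*(2*n*ub*(n-c)*(n-d)*ue))*hcd
     - U*(ks*(n^2-n)+v)*hall

variable (a b g d : ℝ)

def Lam (m : ℕ) : PowerSeries ℝ :=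
  pr 1 (-g-b) m * pr 1 (-d-b) m * pr (1/2) (b+d) m * pr (1/2) (b+g) m * pr 1 (-g-d) (2*m)
    * C (1 / ph (1/2) (2*m))

/-- `Ff m l` with `j = m+1+l` (without the factor `2(j+a)`) -/
def Uf (m l : ℕ) : PowerSeries ℝ :=
  Lam b g d m * pr 1 (a+b) (m+l) * ipr 1 (a-b) (m+l+1) * pr 1 (a+g) l * ipr 1 (a-g) (2*m+l+1)
   * pr 1 (a+d) l * ipr 1 (a-d) (2*m+l+1) * pr (1/2) (a-b-g-d) (m+l+1) * ipr (1/2) (a+b+g+d) (m+l+1)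

def Ff (m l : ℕ) : PowerSeries ℝ := Uf a b g d m l * lin (2*((m:ℝ)+1+l)) (2*a)

def ksm (m : ℕ) : ℝ := -1 / (2*(m:ℝ)+1/2)
def ism (m : ℕ) : ℝ := 1 / (2*(m:ℝ)+3/2)

/-- certificate polynomial `P(n+1/2)` at `n = j + a` -/
def Pc (m l : ℕ) : PowerSeries ℝ :=
  C (ksm m) * (lin ((m:ℝ)+1+l) a * lin ((m:ℝ)+1+l+1) a)
   + nu (C (ksm m)) (C (ism m)) (lin 0 b) (lin (1/2) (-b-g-d)) (lin ((m:ℝ)+1) (-g)) (lin ((m:ℝ)+1) (-d))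

def Gf (m l : ℕ) : PowerSeries ℝ :=
  Uf a b g d m l * Pc a b g d m l * lin ((m:ℝ)+1+l) (a+b) * lin ((m:ℝ)+1+l+1/2) (a-b-g-d)
   * (lin (2*(m:ℝ)+l+2) (a-g))⁻¹ * (lin (2*(m:ℝ)+l+2) (a-d))⁻¹

lemma lin_add (k l x y : ℝ) : lin k x + lin l y = lin (k+l) (x+y) := by
  simp [lin]; ring
lemma lin_sub (k l x y : ℝ) : lin k x - lin l y = lin (k-l) (x-y) := by
  simp [lin]; ring

lemma Lam_succ (m : ℕ) : Lam b g d (m+1) = Lam b g d m *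
   (lin ((m:ℝ)+1) (-g-b) * lin ((m:ℝ)+1) (-d-b) * lin ((m:ℝ)+1/2) (b+d) * lin ((m:ℝ)+1/2) (b+g)
    * lin (2*(m:ℝ)+1) (-g-d) * lin (2*(m:ℝ)+2) (-g-d) * C (1/((2*(m:ℝ)+1/2)*(2*(m:ℝ)+3/2)))) := by
  have e : 2*(m+1) = 2*m+1+1 := by ring
  have e2 : ((2*m+1 : ℕ) : ℝ) + 1 = 2*(m:ℝ)+2 := by push_cast; ring
  have e3 : ((2*m : ℕ) : ℝ) + 1 = 2*(m:ℝ)+1 := by push_cast; ring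
  have e4 : ph (1/2) (2*m+1+1) = ph (1/2) (2*m) * ((2*(m:ℝ)+1/2)*(2*(m:ℝ)+3/2)) := by
    rw [ph_succ, ph_succ]; push_cast; ring
  have e5 : C (1 / (ph (1/2) (2*m) * ((2*(m:ℝ)+1/2)*(2*(m:ℝ)+3/2)))) =
      C (1 / ph (1/2) (2*m)) * C (1/((2*(m:ℝ)+1/2)*(2*(m:ℝ)+3/2))) := by
    rw [← map_mul, one_div_mul_one_div]
  unfold Lam
  rw [e, pr_succ, pr_succ, pr_succ, pr_succ, pr_succ, pr_succ, e2, e3, e4, e5]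
  ring

lemma wz_step (m l : ℕ) :
    Ff a b g d m (l+1) = Ff a b g d (m+1) l + Gf a b g d m (l+1) - Gf a b g d m l := by
  have hm : (0:ℝ) ≤ m := by positivity
  have hl : (0:ℝ) ≤ l := by positivity
  have key := step_id (C (ksm m)) (C (ism m)) (lin 0 b) (lin (1/2) (-b-g-d)) (lin ((m:ℝ)+1) (-g))
    (lin ((m:ℝ)+1) (-d)) (lin ((m:ℝ)+1+l+1) a)
    (lin ((m:ℝ)+1) (-g-b) * lin ((m:ℝ)+1) (-d-b) * lin ((m:ℝ)+1/2) (b+d) * lin ((m:ℝ)+1/2) (b+g)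
    * lin (2*(m:ℝ)+1) (-g-d) * lin (2*(m:ℝ)+2) (-g-d) * C (1/((2*(m:ℝ)+1/2)*(2*(m:ℝ)+3/2))))
    (C (2*(m:ℝ)+3/2)) (Uf a b g d m l * lin ((m:ℝ)+1+l) (a+b) * lin ((m:ℝ)+1+l+1/2) (a-b-g-d)
   * (lin (2*(m:ℝ)+l+2) (a-g))⁻¹ * (lin (2*(m:ℝ)+l+2) (a-d))⁻¹)
    (lin ((m:ℝ)+1+l+1) (a-b))⁻¹ (lin ((m:ℝ)+1+l+1/2) (a+b+g+d))⁻¹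
    (lin (2*(m:ℝ)+l+3) (a-g))⁻¹ (lin (2*(m:ℝ)+l+3) (a-d))⁻¹ ?_ ?_ ?_ ?_ ?_ ?_ ?_ ?_
  · have c1 : lin ((m:ℝ)+1+l+1) a - lin ((m:ℝ)+1) (-g) = lin ((l:ℝ)+1) (a+g) := by
      rw [lin_sub]; congr 1 <;> ring
    have c2 : lin ((m:ℝ)+1+l+1) a - lin ((m:ℝ)+1) (-d) = lin ((l:ℝ)+1) (a+d) := by
      rw [lin_sub]; congr 1 <;> ring
    have c3 : lin ((m:ℝ)+1+l+1) a + lin 0 b = lin ((m:ℝ)+1+l+1) (a+b) := by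
      rw [lin_add]; congr 1; ring
    have c4 : lin ((m:ℝ)+1+l+1) a + lin (1/2) (-b-g-d) = lin ((m:ℝ)+1+l+1+1/2) (a-b-g-d) := by
      rw [lin_add]; congr 1; ring
    have c5 : (2:PowerSeries ℝ) * lin ((m:ℝ)+1+l+1) a = lin (2*((m:ℝ)+1+l+1)) (2*a) := by
      rw [two_mul, lin_add]; congr 1 <;> ring
    have c6 : (lin ((m:ℝ)+1+l+1) a)^2 + lin ((m:ℝ)+1+l+1) a = lin ((m:ℝ)+1+l+1) a * lin ((m:ℝ)+1+l+1+1) a := by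
      have : lin ((m:ℝ)+1+l+1+1) a = lin ((m:ℝ)+1+l+1) a + 1 := by simp [lin]; ring
      rw [this]; ring
    have c7 : (lin ((m:ℝ)+1+l+1) a)^2 - lin ((m:ℝ)+1+l+1) a = lin ((m:ℝ)+1+l) a * lin ((m:ℝ)+1+l+1) a := by
      have : lin ((m:ℝ)+1+l) a = lin ((m:ℝ)+1+l+1) a - 1 := by simp [lin]; ring
      rw [this]; ring
    rw [c1, c2, c3, c4, c5, c6, c7] at key
    have d1 : Uf a b g d m (l+1) = (Uf a b g d m l * lin ((m:ℝ)+1+l) (a+b) * lin ((m:ℝ)+1+l+1/2) (a-b-g-d)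
     * (lin (2*(m:ℝ)+l+2) (a-g))⁻¹ * (lin (2*(m:ℝ)+l+2) (a-d))⁻¹) * (lin ((m:ℝ)+1+l+1) (a-b))⁻¹
      * lin ((l:ℝ)+1) (a+g) * lin ((l:ℝ)+1) (a+d) * (lin ((m:ℝ)+1+l+1/2) (a+b+g+d))⁻¹ := by
      unfold Uf
      have i1 : m+(l+1) = m+l+1 := by ring
      have i2 : 2*m+(l+1)+1 = 2*m+l+1+1 := by ring
      rw [i1, i2]
      simp only [pr_succ, ipr_succ]
      have j1 : ((m+l:ℕ):ℝ)+1 = (m:ℝ)+1+l := by push_cast; ring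
      have j2 : ((m+l+1:ℕ):ℝ)+1 = (m:ℝ)+1+l+1 := by push_cast; ring
      have j3 : ((m+l+1:ℕ):ℝ)+1/2 = (m:ℝ)+1+l+1/2 := by push_cast; ring
      have j4 : ((2*m+l+1:ℕ):ℝ)+1 = 2*(m:ℝ)+l+2 := by push_cast; ring
      rw [j1, j2, j3, j4]
      ring
    have d2 : Uf a b g d (m+1) l = (Uf a b g d m l * lin ((m:ℝ)+1+l) (a+b) * lin ((m:ℝ)+1+l+1/2) (a-b-g-d)
     * (lin (2*(m:ℝ)+l+2) (a-g))⁻¹ * (lin (2*(m:ℝ)+l+2) (a-d))⁻¹) *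
      ((lin ((m:ℝ)+1) (-g-b) * lin ((m:ℝ)+1) (-d-b) * lin ((m:ℝ)+1/2) (b+d) * lin ((m:ℝ)+1/2) (b+g)
    * lin (2*(m:ℝ)+1) (-g-d) * lin (2*(m:ℝ)+2) (-g-d) * C (1/((2*(m:ℝ)+1/2)*(2*(m:ℝ)+3/2))))) *
      (lin ((m:ℝ)+1+l+1) (a-b))⁻¹ * (lin (2*(m:ℝ)+l+3) (a-g))⁻¹ * (lin (2*(m:ℝ)+l+3) (a-d))⁻¹
      * (lin ((m:ℝ)+1+l+1/2) (a+b+g+d))⁻¹ := by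
      unfold Uf
      rw [Lam_succ]
      have i1 : m+1+l = m+l+1 := by ring
      have i2 : 2*(m+1)+l+1 = 2*m+l+1+1+1 := by ring
      rw [i1, i2]
      simp only [pr_succ, ipr_succ]
      have j1 : ((m+l:ℕ):ℝ)+1 = (m:ℝ)+1+l := by push_cast; ring
      have j2 : ((m+l+1:ℕ):ℝ)+1 = (m:ℝ)+1+l+1 := by push_cast; ring
      have j3 : ((m+l+1:ℕ):ℝ)+1/2 = (m:ℝ)+1+l+1/2 := by push_cast; ring
      have j4 : ((2*m+l+1:ℕ):ℝ)+1 = 2*(m:ℝ)+l+2 := by push_cast; ring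
      have j5 : ((2*m+l+1+1:ℕ):ℝ)+1 = 2*(m:ℝ)+l+3 := by push_cast; ring
      rw [j1, j2, j3, j4, j5]
      ring
    unfold Ff Gf Pc
    rw [d1, d2]
    have k1 : (m:ℝ)+1+((l+1:ℕ):ℝ) = (m:ℝ)+1+l+1 := by push_cast; ring
    have k2 : ((m+1:ℕ):ℝ)+1+(l:ℝ) = (m:ℝ)+1+l+1 := by push_cast; ring
    have k3 : 2*(m:ℝ)+((l+1:ℕ):ℝ)+2 = 2*(m:ℝ)+l+3 := by push_cast; ring
    rw [k1, k2, k3]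
    generalize nu (C (ksm m)) (C (ism m)) (lin 0 b) (lin (1/2) (-b-g-d)) (lin ((m:ℝ)+1) (-g))
      (lin ((m:ℝ)+1) (-d)) = v at *
    linear_combination key
  · have : C (2*(m:ℝ)+3/2) = lin (2*(m:ℝ)+3/2) 0 := by simp [lin]
    rw [this, lin_add, lin_sub, lin_sub]; congr 1 <;> ring
  · have : (1 : PowerSeries ℝ) = C 1 := by simp
    rw [this, ← map_sub, ← map_mul, ← map_neg, ksm]; congr 1; field_simp; ring
  · rw [← map_mul, ism, one_div_mul_cancel (by positivity), map_one]
  · have : (1 : PowerSeries ℝ) = lin 1 0 := by simp [lin]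
    rw [this]
    simp only [lin_add, lin_sub]
    have e : C (1/((2*(m:ℝ)+1/2)*(2*(m:ℝ)+3/2))) = - (C (ksm m) * C (ism m)) := by
      rw [← map_mul, ← map_neg, ksm, ism]; congr 1; field_simp
    rw [e]
    have f1 : lin ((m:ℝ)+1) (-g-b) = lin ((m:ℝ)+1-0) (-g-b) := by congr 1; ring
    have f2 : lin ((m:ℝ)+1) (-d-b) = lin ((m:ℝ)+1-0) (-d-b) := by congr 1; ring
    have f3 : lin ((m:ℝ)+1/2) (b+d) = lin ((m:ℝ)+1-1/2) (-g-(-b-g-d)) := by congr 1 <;> ring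
    have f4 : lin ((m:ℝ)+1/2) (b+g) = lin ((m:ℝ)+1-1/2) (-d-(-b-g-d)) := by congr 1 <;> ring
    have f5 : lin (2*(m:ℝ)+1) (-g-d) = lin ((m:ℝ)+1+((m:ℝ)+1)-1) (-g+-d-0) := by congr 1 <;> ring
    have f6 : lin (2*(m:ℝ)+2) (-g-d) = lin ((m:ℝ)+1+((m:ℝ)+1)) (-g+-d) := by congr 1 <;> ring
    rw [f1, f2, f3, f4, f5, f6]
    ring
  · have e : lin ((m:ℝ)+1+l+1) a - lin 0 b = lin ((m:ℝ)+1+l+1) (a-b) := by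
      rw [lin_sub]; congr 1; ring
    rw [e]; exact lin_mul_inv (by positivity) _
  · have e : lin ((m:ℝ)+1+l+1) a - lin (1/2) (-b-g-d) = lin ((m:ℝ)+1+l+1/2) (a+b+g+d) := by
      rw [lin_sub]; congr 1 <;> ring
    rw [e]; exact lin_mul_inv (by positivity) _
  · have e : lin ((m:ℝ)+1+l+1) a + lin ((m:ℝ)+1) (-g) = lin (2*(m:ℝ)+l+3) (a-g) := by
      rw [lin_add]; congr 1 <;> ring
    rw [e]; exact lin_mul_inv (by positivity) _
  · have e : lin ((m:ℝ)+1+l+1) a + lin ((m:ℝ)+1) (-d) = lin (2*(m:ℝ)+l+3) (a-d) := by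
      rw [lin_add]; congr 1 <;> ring
    rw [e]; exact lin_mul_inv (by positivity) _

def Tf (m : ℕ) : PowerSeries ℝ := Ff a b g d m 0 - Gf a b g d m 0

lemma wz_sum (L : ℕ) : ∀ m, ∑ l ∈ range L, Ff a b g d m l =
    ∑ i ∈ range L, Tf a b g d (m+i) + ∑ i ∈ range L, Gf a b g d (m+i) (L-1-i) := by
  induction L with
  | zero => simp
  | succ K ih =>
    intro m
    rw [Finset.sum_range_succ']
    have h1 : ∀ l ∈ range K, Ff a b g d m (l+1) = Ff a b g d (m+1) l
        + (Gf a b g d m (l+1) - Gf a b g d m l) := fun l _ => by rw [wz_step]; ring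
    rw [Finset.sum_congr rfl h1, Finset.sum_add_distrib, Finset.sum_range_sub, ih (m+1),
      Finset.sum_range_succ' _ K, Finset.sum_range_succ' _ K]
    have h2 : ∀ i ∈ range K, Tf a b g d (m+(i+1)) = Tf a b g d (m+1+i) := fun i _ => by
      congr 1; ring
    have h3 : ∀ i ∈ range K, Gf a b g d (m+(i+1)) (K+1-1-(i+1)) = Gf a b g d (m+1+i) (K-1-i) :=
      fun i hi => by
        have := mem_range.mp hi
        congr 1 <;> omega
    rw [Finset.sum_congr rfl h2, Finset.sum_congr rfl h3]
    simp only [Tf, add_zero, Nat.add_sub_cancel, Nat.sub_zero]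
    ring

end
end WZ

namespace WZ
open PowerSeries Finset

noncomputable section

def rr : ℝ := 1/4096
def th : ℝ := 1/128
lemma rr0 : (0:ℝ) ≤ rr := by norm_num [rr]
lemma th0 : (0:ℝ) ≤ th := by norm_num [th]
lemma th1 : th < 1 := by norm_num [th]

lemma nmm {f g : PowerSeries ℝ} {A B : ℝ} (hf : nm rr f ≤ A) (hg : nm rr g ≤ B) :
    nm rr (f * g) ≤ A * B :=
  (nm_mul rr0 f g).trans (mul_le_mul hf hg (nm_nonneg rr0 _) ((nm_nonneg rr0 _).trans hf))

lemma nma {f g : PowerSeries ℝ} {A B : ℝ} (hf : nm rr f ≤ A) (hg : nm rr g ≤ B) :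
    nm rr (f + g) ≤ A + B :=
  (nm_add rr0 f g).trans (add_le_add hf hg)

lemma nms {f g : PowerSeries ℝ} {A B : ℝ} (hf : nm rr f ≤ A) (hg : nm rr g ≤ B) :
    nm rr (f - g) ≤ A + B := by
  have h : nm rr (-g) = nm rr g := by simp [nm]
  rw [sub_eq_add_neg]
  exact nma hf (h ▸ hg)

lemma rx {x : ℝ} (hx : |x| ≤ 16) : 2 * (|x| * rr) ≤ th := by
  unfold rr th; linarith

lemma bpr {k x : ℝ} (hk : 1/2 ≤ k) (hx : |x| ≤ 16) {n N : ℕ} (h : n ≤ N) :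
    nm rr (pr k x n) ≤ ph k n * ls th N :=
  (nm_pr rr0 th0 th1 hk (rx hx) n).trans
    (mul_le_mul_of_nonneg_left (ls_mono th0 th1 h) (ph_pos (by linarith) n).le)

lemma bipr {k x : ℝ} (hk : 1/2 ≤ k) (hx : |x| ≤ 16) {n N : ℕ} (h : n ≤ N) :
    nm rr (ipr k x n) ≤ ls th N / ph k n :=
  (nm_ipr rr0 th0 th1 hk (rx hx) n).trans
    (div_le_div_of_nonneg_right (ls_mono th0 th1 h) (ph_pos (by linarith) n).le)

lemma blin {k x K : ℝ} (hk : 0 ≤ k) (hx : |x| ≤ 16) (h : k + 1/2 ≤ K) : nm rr (lin k x) ≤ K := by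
  refine (nm_lin rr0 k x).trans ?_
  rw [abs_of_nonneg hk]; unfold rr; linarith

lemma bilin {k x K : ℝ} (hx : |x| ≤ 16) (hK : 0 < K) (h : K ≤ k - 1/4) :
    nm rr (lin k x)⁻¹ ≤ 1 / K := by
  refine (nm_lin_inv rr0 k x (by unfold rr; linarith)).trans ?_
  exact one_div_le_one_div_of_le hK (by unfold rr; linarith)

lemma bC (c : ℝ) : nm rr (C c) ≤ |c| := (nm_C _ _).le

lemma ls_bound {p : ℕ} (hp : p ≤ 16) (n : ℕ) : ls th n ^ p ≤ Real.sqrt ((n:ℝ) + 1) := by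
  have h1 := one_le_ls th0 th1 n
  have h2 := ls_pow (θ := th) 32 (by norm_num) th0 (by norm_num [th]) n
  refine (pow_le_pow_right₀ h1 hp).trans ?_
  refine Real.le_sqrt_of_sq_le ?_
  rw [← pow_mul]; exact h2

lemma ph_one (n : ℕ) : ph 1 n = (n.factorial : ℝ) := by
  induction n with
  | zero => simp [ph]
  | succ n ih => rw [ph_succ, ih, Nat.factorial_succ]; push_cast; ring

lemma ph_one_succ (n : ℕ) : ph 1 (n+1) = ph 1 n * ((n:ℝ)+1) := ph_succ 1 n

lemma lam_bound (m : ℕ) : ph 1 m * ph 1 m * ph (1/2) m * ph (1/2) m * ph 1 (2*m) *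
    (1 / ph (1/2) (2*m)) ≤ (ph 1 m)^4 := by
  induction m with
  | zero => simp [ph]
  | succ m ih =>
    have e : 2*(m+1) = 2*m+1+1 := by ring
    have p1 := ph_pos (k := 1/2) (by norm_num) (2*m)
    have p2 := ph_pos (k := 1/2) (by norm_num) m
    have p3 := ph_pos (k := 1) (by norm_num) m
    have p4 := ph_pos (k := 1) (by norm_num) (2*m)
    have hm : (0:ℝ) ≤ m := by positivity
    rw [e, ph_succ 1 m, ph_succ (1/2) m, ph_succ, ph_succ, ph_succ, ph_succ]
    push_cast
    have h2 : ((m:ℝ)+1)^2*((m:ℝ)+1/2)^2*((2*m+1)*(2*m+2))*(1/((2*m+1/2)*(2*m+3/2))) ≤ ((m:ℝ)+1)^4 := by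
      rw [mul_one_div, div_le_iff₀ (by positivity)]
      have h3 : ((m:ℝ)+1/2)^2*((2*m+1)*(2*m+2)) ≤ ((m:ℝ)+1)^2 * ((2*m+1/2)*(2*m+3/2)) := by
        nlinarith [hm, mul_nonneg hm hm, mul_nonneg hm (mul_nonneg hm hm)]
      have := mul_le_mul_of_nonneg_left h3 (sq_nonneg ((m:ℝ)+1))
      linarith
    have := mul_le_mul ih h2 (by positivity) (by positivity)
    calc _ = _ := ?_
      _ ≤ _ := this
      _ = _ := by ring
    field_simp
    ring

lemma fac_ineq (k l : ℕ) : (k+1).factorial * (k+l+3).factorial ≤ (2*k+l+3).factorial := by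
  induction k with
  | zero => simp
  | succ k ih =>
    have e1 : 2*(k+1)+l+3 = 2*k+l+3+1+1 := by ring
    have e2 : k+1+l+3 = k+l+3+1 := by ring
    rw [e1, e2, Nat.factorial_succ (k+1), Nat.factorial_succ (k+l+3), Nat.factorial_succ (2*k+l+3+1),
      Nat.factorial_succ (2*k+l+3)]
    have : (k+1+1)*(k+l+3+1) ≤ (2*k+l+3+1+1)*(2*k+l+3+1) := Nat.mul_le_mul (by omega) (by omega)
    calc _ = ((k+1+1)*(k+l+3+1)) * ((k+1).factorial * (k+l+3).factorial) := by ring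
      _ ≤ ((2*k+l+3+1+1)*(2*k+l+3+1)) * (2*k+l+3).factorial := Nat.mul_le_mul this ih
      _ = _ := by ring

/-- decay of the constant term for `m ≥ 1` -/
lemma fac_bound (m l : ℕ) (hm : 1 ≤ m) :
    ph 1 m ^ 2 * ph 1 l / ph 1 (2*m+l+1) ≤ 1 / (((m:ℝ)+l+1)^2) := by
  obtain ⟨k, rfl⟩ : ∃ k, m = k+1 := ⟨m-1, by omega⟩
  have h1 : (k+1).factorial * l.factorial ≤ (k+1+l).factorial :=
    Nat.le_of_dvd (Nat.factorial_pos _) (Nat.factorial_mul_factorial_dvd_factorial_add _ _)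
  have h2 := fac_ineq k l
  have h3 : (k+1).factorial^2 * l.factorial * (k+1+l+1)^2 ≤ (2*(k+1)+l+1).factorial := by
    have e1 : 2*(k+1)+l+1 = 2*k+l+3 := by ring
    have e2 : (k+l+3).factorial = (k+l+3)*((k+l+2)*(k+1+l).factorial) := by
      have : k+1+l = k+l+1 := by ring
      rw [this, Nat.factorial_succ, Nat.factorial_succ]
    rw [e1]; refine le_trans ?_ h2; rw [e2]
    calc _ = (k+1).factorial * ((k+l+2)*((k+l+2)*((k+1).factorial*l.factorial))) := by ring
      _ ≤ _ := by gcongr; omega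
  simp only [ph_one]
  rw [div_le_div_iff₀ (by exact_mod_cast Nat.factorial_pos _) (by positivity), one_mul]
  exact_mod_cast h3

lemma fac_bound0 (l : ℕ) :
    ph 1 0 ^ 2 * ph 1 l / ph 1 (2*0+l+1) ≤ 1 / ((l:ℝ)+1) := by
  have := ph_pos (k := 1) (by norm_num) l
  rw [show 2*0+l+1 = l+1 by ring, ph_one_succ]
  simp only [ph, range_zero, prod_empty, one_pow, one_mul]
  change ph 1 l / (ph 1 l * _) ≤ _
  apply le_of_eq; field_simp

variable {a b g d : ℝ}

lemma Uf_bound (ha : |a| ≤ 3) (hb : |b| ≤ 3) (hg : |g| ≤ 3) (hd : |d| ≤ 3) (m l : ℕ) :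
    nm rr (Uf a b g d m l) ≤ (ph 1 m ^ 2 * ph 1 l / ph 1 (2*m+l+1))^2 * (1/((m:ℝ)+l+1)) *
      ls th (2*(m+l+1)) ^ 13 := by
  rw [abs_le] at ha hb hg hd
  have X1 : |-g-b| ≤ 16 := by rw [abs_le]; constructor <;> linarith
  have X2 : |-d-b| ≤ 16 := by rw [abs_le]; constructor <;> linarith
  have X3 : |b+d| ≤ 16 := by rw [abs_le]; constructor <;> linarith
  have X4 : |b+g| ≤ 16 := by rw [abs_le]; constructor <;> linarith
  have X5 : |-g-d| ≤ 16 := by rw [abs_le]; constructor <;> linarith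
  have X6 : |a+b| ≤ 16 := by rw [abs_le]; constructor <;> linarith
  have X7 : |a-b| ≤ 16 := by rw [abs_le]; constructor <;> linarith
  have X8 : |a+g| ≤ 16 := by rw [abs_le]; constructor <;> linarith
  have X9 : |a-g| ≤ 16 := by rw [abs_le]; constructor <;> linarith
  have X10 : |a+d| ≤ 16 := by rw [abs_le]; constructor <;> linarith
  have X11 : |a-d| ≤ 16 := by rw [abs_le]; constructor <;> linarith
  have X12 : |a-b-g-d| ≤ 16 := by rw [abs_le]; constructor <;> linarith
  have X13 : |a+b+g+d| ≤ 16 := by rw [abs_le]; constructor <;> linarith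
  set N := 2*(m+l+1) with hN
  have k1 : (1:ℝ)/2 ≤ 1 := by norm_num
  have k2 : (1:ℝ)/2 ≤ 1/2 := le_rfl
  have hL : nm rr (Lam b g d m) ≤ ph 1 m ^ 4 * ls th N ^ 5 := by
    unfold Lam
    have p1 := ph_pos (k := 1/2) (by norm_num) (2*m)
    have := nmm (nmm (nmm (nmm (nmm (bpr (n := m) (N := N) k1 X1 (by omega)) (bpr (n := m) (N := N) k1 X2 (by omega)))
      (bpr (n := m) (N := N) k2 X3 (by omega))) (bpr (n := m) (N := N) k2 X4 (by omega)))
      (bpr (n := 2*m) (N := N) k1 X5 (by omega))) (bC (1 / ph (1/2) (2*m)))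
    refine this.trans ?_
    rw [abs_of_pos (by positivity)]
    have h2 := mul_le_mul_of_nonneg_right (lam_bound m)
      (pow_nonneg (zero_le_one.trans (one_le_ls th0 th1 N)) 5)
    refine le_trans (le_of_eq ?_) h2
    ring
  unfold Uf
  have := nmm (nmm (nmm (nmm (nmm (nmm (nmm (nmm hL (bpr (n := m+l) (N := N) k1 X6 (by omega)))
    (bipr (n := m+l+1) (N := N) k1 X7 (by omega)))
    (bpr (n := l) (N := N) k1 X8 (by omega))) (bipr (n := 2*m+l+1) (N := N) k1 X9 (by omega)))
    (bpr (n := l) (N := N) k1 X10 (by omega))) (bipr (n := 2*m+l+1) (N := N) k1 X11 (by omega)))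
    (bpr (n := m+l+1) (N := N) k2 X12 (by omega))) (bipr (n := m+l+1) (N := N) k2 X13 (by omega))
  refine this.trans (le_of_eq ?_)
  have q1 := ph_pos (k := 1/2) (by norm_num) (m+l+1)
  have q2 := ph_pos (k := 1) (by norm_num) (m+l)
  have q3 := ph_pos (k := 1) (by norm_num) (2*m+l+1)
  have q4 := ph_one_succ (m+l)
  rw [q4]
  have q5 : (0:ℝ) < (m:ℝ)+l+1 := by positivity
  push_cast
  field_simp

lemma Pc_bound (ha : |a| ≤ 3) (hb : |b| ≤ 3) (hg : |g| ≤ 3) (hd : |d| ≤ 3) (m l : ℕ) :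
    nm rr (Pc a b g d m l) ≤ 100 * ((m:ℝ)+l+1)^2 := by
  have hm : (0:ℝ) ≤ m := by positivity
  have hl : (0:ℝ) ≤ l := by positivity
  have ha' : |a| ≤ 16 := by linarith
  have hb' : |b| ≤ 16 := by linarith
  have hg' : |-g| ≤ 16 := by rw [abs_neg]; linarith
  have hd' : |-d| ≤ 16 := by rw [abs_neg]; linarith
  rw [abs_le] at hb hg hd
  have he' : |-b-g-d| ≤ 16 := by rw [abs_le]; constructor <;> linarith
  set L : ℝ := (m:ℝ)+l+1 with hL
  have B1 : nm rr (lin ((m:ℝ)+1+l) a) ≤ 2*L := blin (by positivity) ha' (by linarith)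
  have B2 : nm rr (lin ((m:ℝ)+1+l+1) a) ≤ 3*L := blin (by positivity) ha' (by linarith)
  have B3 : nm rr (lin 0 b) ≤ 1 := blin le_rfl hb' (by norm_num)
  have B4 : nm rr (lin (1/2) (-b-g-d)) ≤ 1 := blin (by norm_num) he' (by norm_num)
  have B5 : nm rr (lin ((m:ℝ)+1) (-g)) ≤ 2*L := blin (by positivity) hg' (by linarith)
  have B6 : nm rr (lin ((m:ℝ)+1) (-d)) ≤ 2*L := blin (by positivity) hd' (by linarith)
  have B7 : nm rr (C (ksm m)) ≤ 2 := by
    refine (bC _).trans ?_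
    rw [ksm, abs_div, abs_neg, abs_one, abs_of_pos (by positivity), div_le_iff₀ (by positivity)]
    linarith
  have B8 : nm rr (C (ism m)) ≤ 1 := by
    refine (bC _).trans ?_
    rw [ism, abs_div, abs_one, abs_of_pos (by positivity), div_le_iff₀ (by positivity)]
    linarith
  unfold Pc nu
  rw [pow_two, pow_two]
  have := nma (nmm B7 (nmm B1 B2)) (nmm B8 (nma (nma (nmm B5 B5) (nmm B6 B6)) (nmm B7
    (nma (nms (nma (nmm B3 B4) (nmm B5 B6)) (nmm (nma B3 B4) (nma B5 B6)))
     (nms (nmm (nmm B5 B6) (nma B3 B4)) (nmm (nmm B3 B4) (nma B5 B6)))))))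
  refine this.trans ?_
  have : 1 ≤ L := by linarith
  nlinarith

lemma Gf_bound (ha : |a| ≤ 3) (hb : |b| ≤ 3) (hg : |g| ≤ 3) (hd : |d| ≤ 3) (m l : ℕ) :
    nm rr (Gf a b g d m l) ≤ (ph 1 m ^ 2 * ph 1 l / ph 1 (2*m+l+1))^2 *
      (500*((m:ℝ)+l+1)) * ls th (2*(m+l+1)) ^ 13 := by
  have hm : (0:ℝ) ≤ m := by positivity
  have hl : (0:ℝ) ≤ l := by positivity
  have h1 := Uf_bound ha hb hg hd m l
  have h2 := Pc_bound ha hb hg hd m l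
  rw [abs_le] at ha hb hg hd
  have X6 : |a+b| ≤ 16 := by rw [abs_le]; constructor <;> linarith
  have X9 : |a-g| ≤ 16 := by rw [abs_le]; constructor <;> linarith
  have X11 : |a-d| ≤ 16 := by rw [abs_le]; constructor <;> linarith
  have X12 : |a-b-g-d| ≤ 16 := by rw [abs_le]; constructor <;> linarith
  set L : ℝ := (m:ℝ)+l+1 with hL
  have hL1 : 1 ≤ L := by linarith
  have B1 : nm rr (lin ((m:ℝ)+1+l) (a+b)) ≤ 2*L := blin (by positivity) X6 (by linarith)
  have B2 : nm rr (lin ((m:ℝ)+1+l+1/2) (a-b-g-d)) ≤ 2*L := blin (by positivity) X12 (by linarith)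
  have B3 : nm rr (lin (2*(m:ℝ)+l+2) (a-g))⁻¹ ≤ 1/L := bilin X9 (by linarith) (by linarith)
  have B4 : nm rr (lin (2*(m:ℝ)+l+2) (a-d))⁻¹ ≤ 1/L := bilin X11 (by linarith) (by linarith)
  refine (nmm (nmm (nmm (nmm (nmm h1 h2) B1) B2) B3) B4).trans ?_
  have hls : 0 ≤ ls th (2*(m+l+1)) ^ 13 := pow_nonneg (zero_le_one.trans (one_le_ls th0 th1 _)) _
  have : 0 ≤ (ph 1 m ^ 2 * ph 1 l / ph 1 (2*m+l+1))^2 * L * ls th (2*(m+l+1)) ^ 13 := by positivity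
  refine le_trans (le_of_eq (b := 400 * ((ph 1 m ^ 2 * ph 1 l / ph 1 (2*m+l+1))^2 * L * ls th (2*(m+l+1)) ^ 13)) ?_) (by linarith)
  field_simp
  ring

lemma err_bound (ha : |a| ≤ 3) (hb : |b| ≤ 3) (hg : |g| ≤ 3) (hd : |d| ≤ 3) (K : ℕ) :
    nm rr (∑ i ∈ range (K+1), Gf a b g d (0+i) (K+1-1-i)) ≤
      1000 / ((K:ℝ)+1) * Real.sqrt (2*((K:ℝ)+1)+1) := by
  refine (nm_sum rr0 _ _).trans ?_
  set R := Real.sqrt (2*((K:ℝ)+1)+1) with hR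
  set L : ℝ := (K:ℝ)+1 with hL
  have hLp : 1 ≤ L := by rw [hL]; have : (0:ℝ) ≤ K := by positivity
                         linarith
  have hR0 : 0 ≤ R := Real.sqrt_nonneg _
  have hls : ls th (2*(K+1)) ^ 13 ≤ R := by
    have := ls_bound (p := 13) (by norm_num) (2*(K+1))
    push_cast at this; exact this
  have hls0 : 0 ≤ ls th (2*(K+1)) ^ 13 := pow_nonneg (zero_le_one.trans (one_le_ls th0 th1 _)) _
  rw [Finset.sum_range_succ']
  have hz : nm rr (Gf a b g d (0+0) (K+1-1-0)) ≤ 500 / L * R := by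
    have h1 := Gf_bound ha hb hg hd 0 K
    have h2 := fac_bound0 K
    have e : 0+K+1 = K+1 := by ring
    rw [e] at h1
    simp only [Nat.cast_zero, zero_add] at h1 ⊢
    refine h1.trans ?_
    refine mul_le_mul ?_ hls hls0 (by positivity)
    have h0 : 0 ≤ ph 1 0 ^ 2 * ph 1 K / ph 1 (2*0+K+1) := by
      have := ph_pos (k := 1) (by norm_num) K
      have := ph_pos (k := 1) (by norm_num) (2*0+K+1)
      positivity
    have := mul_le_mul_of_nonneg_right (pow_le_pow_left₀ h0 h2 2) (show (0:ℝ) ≤ 500*L by linarith)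
    simp only [mul_zero, zero_add] at this ⊢
    refine this.trans (le_of_eq ?_)
    rw [← hL]; field_simp
  have hs : ∀ i ∈ range K, nm rr (Gf a b g d (0+(i+1)) (K+1-1-(i+1))) ≤ 500 / L^3 * R := by
    intro i hi
    have hi' := mem_range.mp hi
    obtain ⟨l, hl⟩ : ∃ l, K = i+1+l := ⟨K-(i+1), by omega⟩
    have e1 : K+1-1-(i+1) = l := by omega
    rw [e1, zero_add]
    have h1 := Gf_bound ha hb hg hd (i+1) l
    have h2 := fac_bound (i+1) l (by omega)
    have e : i+1+l+1 = K+1 := by omega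
    have eL : ((i+1:ℕ):ℝ)+l+1 = L := by rw [hL, hl]; push_cast; ring
    rw [e, eL] at h1
    rw [eL] at h2
    refine h1.trans ?_
    refine mul_le_mul ?_ hls hls0 (by positivity)
    have h0 : 0 ≤ ph 1 (i+1) ^ 2 * ph 1 l / ph 1 (2*(i+1)+l+1) := by
      have := ph_pos (k := 1) (by norm_num) l
      have := ph_pos (k := 1) (by norm_num) (2*(i+1)+l+1)
      positivity
    have := mul_le_mul_of_nonneg_right (pow_le_pow_left₀ h0 h2 2) (show (0:ℝ) ≤ 500*L by linarith)
    refine this.trans (le_of_eq ?_)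
    field_simp
  refine (add_le_add (Finset.sum_le_sum hs) hz).trans ?_
  rw [Finset.sum_const, card_range, nsmul_eq_mul]
  have : (K:ℝ) * (500 / L^3 * R) ≤ 500 / L * R := by
    have hK : (K:ℝ) = L - 1 := by rw [hL]; ring
    rw [← mul_assoc]
    refine mul_le_mul_of_nonneg_right ?_ hR0
    rw [mul_div_assoc', div_le_div_iff₀ (by positivity) (by positivity), hK]
    nlinarith [sq_nonneg (L-1)]
  have e : 1000 / L * R = 500 / L * R + 500 / L * R := by ring
  linarith

lemma tendsto_sqrt_div (c : ℝ) :
    Tendsto (fun K : ℕ => c / ((K:ℝ)+1) * Real.sqrt (2*((K:ℝ)+1)+1)) atTop (𝓝 0) := by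
  have h1 : Tendsto (fun K : ℕ => |c| * 2 * (Real.sqrt ((K:ℝ)+1))⁻¹) atTop (𝓝 0) := by
    have : Tendsto (fun K : ℕ => Real.sqrt ((K:ℝ)+1)) atTop atTop :=
      Real.tendsto_sqrt_atTop.comp (tendsto_atTop_add_const_right _ _ tendsto_natCast_atTop_atTop)
    simpa using this.inv_tendsto_atTop.const_mul (|c| * 2)
  refine squeeze_zero_norm (fun K => ?_) h1
  have hK : (0:ℝ) ≤ K := by positivity
  have hp : (0:ℝ) < (K:ℝ)+1 := by positivity
  rw [norm_mul, norm_div, Real.norm_eq_abs, Real.norm_eq_abs, Real.norm_eq_abs, abs_of_pos hp,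
    abs_of_nonneg (Real.sqrt_nonneg _)]
  have h2 : Real.sqrt (2*((K:ℝ)+1)+1) ≤ 2 * Real.sqrt ((K:ℝ)+1) := by
    rw [Real.sqrt_le_left (by positivity), mul_pow, Real.sq_sqrt hp.le]; linarith
  have h3 : (Real.sqrt ((K:ℝ)+1)) * Real.sqrt ((K:ℝ)+1) = (K:ℝ)+1 := Real.mul_self_sqrt hp.le
  have h4 : 0 < Real.sqrt ((K:ℝ)+1) := Real.sqrt_pos.mpr hp
  calc |c| / ((K:ℝ)+1) * Real.sqrt (2*((K:ℝ)+1)+1) ≤ |c| / ((K:ℝ)+1) * (2 * Real.sqrt ((K:ℝ)+1)) := by gcongr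
    _ = _ := by
      have := h4.ne'
      generalize Real.sqrt ((K:ℝ)+1) = y at *
      rw [← h3]
      field_simp

/-- the two walks have the same limit, coefficientwise -/
theorem F_walk (ha : |a| ≤ 3) (hb : |b| ≤ 3) (hg : |g| ≤ 3) (hd : |d| ≤ 3) {i : ℕ} (hi : i < 7) {Ω : ℝ}
    (h : Tendsto (fun K : ℕ => ∑ l ∈ range K, coeff i (Ff a b g d 0 l)) atTop (𝓝 Ω)) :
    Tendsto (fun K : ℕ => ∑ m ∈ range K, coeff i (Tf a b g d m)) atTop (𝓝 Ω) := by
  have hE : Tendsto (fun K : ℕ => coeff i (∑ i ∈ range (K+1), Gf a b g d (0+i) (K+1-1-i))) atTop (𝓝 0) := by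
    refine tendsto_coeff_zero (r := rr) (by norm_num [rr]) _ ?_ hi
    exact squeeze_zero (fun _ => nm_nonneg rr0 _) (fun K => err_bound ha hb hg hd K) (tendsto_sqrt_div 1000)
  rw [← tendsto_add_atTop_iff_nat 1] at h ⊢
  have := h.sub hE
  rw [sub_zero] at this
  refine this.congr fun K => ?_
  rw [← map_sum, wz_sum, map_add, add_sub_cancel_right, map_sum]
  simp

end
end WZ

namespace WZ
open PowerSeries Finset

noncomputable section

lemma pr_shift (k x : ℝ) (l : ℕ) : lin k x * pr (k+1) x l = pr k x l * lin ((l:ℝ)+k) x := by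
  rw [← pr_succ]; unfold pr
  rw [Finset.prod_range_succ', mul_comm]
  congr 1
  · refine Finset.prod_congr rfl fun i _ => ?_
    congr 1; push_cast; ring
  · simp

lemma ipr_shift (k x : ℝ) (l : ℕ) :
    (lin k x)⁻¹ * ipr (k+1) x l = ipr k x l * (lin ((l:ℝ)+k) x)⁻¹ := by
  rw [← ipr_succ]; unfold ipr
  rw [Finset.prod_range_succ', mul_comm]
  congr 1
  · refine Finset.prod_congr rfl fun i _ => ?_
    congr 2; push_cast; ring
  · simp

section walk
variable (a x y : ℝ)

def uu (i l : ℕ) : PowerSeries ℝ :=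
  pr ((i:ℝ)+1) (2*a) l * C (1 / ph 1 (l+1)) * pr 1 (a+x) l * pr 1 (a+y) l * pr (1/2) (-x-y) (l+1)
   * ipr ((i:ℝ)+1) (a-x) (l+1) * ipr ((i:ℝ)+1) (a-y) (l+1) * ipr ((i:ℝ)+1/2) (2*a+x+y) (l+1)

def hh (i l : ℕ) : PowerSeries ℝ := lin ((i:ℝ)+2*(l+1)) (2*a) * uu a x y i l

def gm (i l : ℕ) : PowerSeries ℝ :=
  - (C ((l:ℝ)+1) * lin ((l:ℝ)+1+2*i+1/2) (2*a) * (lin ((i:ℝ)+1/2) 0)⁻¹ * uu a x y i l)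

def rho (i : ℕ) : PowerSeries ℝ :=
  lin ((i:ℝ)+1) (2*a) * lin ((i:ℝ)+1) (-x-y) * lin ((i:ℝ)+1/2) (a+x) * lin ((i:ℝ)+1/2) (a+y)
   * (lin ((i:ℝ)+1) (a-x))⁻¹ * (lin ((i:ℝ)+1) (a-y))⁻¹ * (lin ((i:ℝ)+1/2) (2*a+x+y))⁻¹
   * (lin ((i:ℝ)+1/2) 0)⁻¹

def PP (i : ℕ) : PowerSeries ℝ :=
  pr 1 (2*a) i * pr 1 (-x-y) i * pr (1/2) (a+x) i * pr (1/2) (a+y) i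
   * ipr 1 (a-x) i * ipr 1 (a-y) i * ipr (1/2) (2*a+x+y) i * ipr (1/2) 0 i

lemma PP_succ (i : ℕ) : PP a x y (i+1) = PP a x y i * rho a x y i := by
  unfold PP rho
  simp only [pr_succ, ipr_succ]; ring

lemma awalk_id {R : Type*} [CommRing R] (A c d e j u I1 I2 I3 I0 : R)
    (h0 : (1+A-c-d-e)*I0 = 1) (h1 : (1+A-c+j)*I1 = 1) (h2 : (1+A-d+j)*I2 = 1)
    (h3 : (1+A-e+j)*I3 = 1) :
    (A+2*j)*u - (A+2*j+1)*(A+j)*(1+A-c-d)*(1+A-d-e)*(1+A-c-e)*I0*I1*I2*I3*u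
     = -((j+1+(1+2*A-c-d-e))*I0*(A+j)*(c+j)*(d+j)*(e+j)*I1*I2*I3*u)
       + j*(j+(1+2*A-c-d-e))*I0*u := by
  have hall : (1+A-c+j)*I1*((1+A-d+j)*I2)*((1+A-e+j)*I3) = 1 := by rw [h1,h2,h3]; ring
  linear_combination (-u*(A+2*j)) * h0 -
    (u*(A+2*j)*((1+A-c-d-e)*I0) - j*(j+(1+2*A-c-d-e))*I0*u) * hall

lemma hh_step (i l : ℕ) : hh a x y i l - rho a x y i * hh a x y (i+1) l
    = gm a x y i (l+1) - gm a x y i l := by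
  have hi : (0:ℝ) ≤ i := by positivity
  have hl : (0:ℝ) ≤ l := by positivity
  have key := awalk_id (lin (i:ℝ) (2*a)) (lin 0 (a+x)) (lin 0 (a+y)) (lin (1/2) (-x-y))
    (lin ((l:ℝ)+1) 0) (uu a x y i l) (lin ((l:ℝ)+1+(i+1)) (a-x))⁻¹ (lin ((l:ℝ)+1+(i+1)) (a-y))⁻¹
    (lin ((l:ℝ)+1+(i+1/2)) (2*a+x+y))⁻¹ (lin ((i:ℝ)+1/2) 0)⁻¹
  have one : (1 : PowerSeries ℝ) = lin 1 0 := by simp [lin]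
  have two : ∀ k z : ℝ, (2 : PowerSeries ℝ) * lin k z = lin (2*k) (2*z) := by
    intro k z; rw [two_mul, lin_add]; congr 1 <;> ring
  rw [one] at key
  simp only [two, lin_add, lin_sub] at key
  have E0 : lin (1 + (i:ℝ) - 0 - 0 - 1 / 2) (0 + 2 * a - (a + x) - (a + y) - (-x - y)) = lin ((i:ℝ)+1/2) 0 := by
    congr 1 <;> ring
  have E1 : lin (1 + (i:ℝ) - 0 + (l + 1)) (0 + 2 * a - (a + x) + 0) = lin ((l:ℝ)+1+(i+1)) (a-x) := by
    congr 1 <;> ring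
  have E2 : lin (1 + (i:ℝ) - 0 + (l + 1)) (0 + 2 * a - (a + y) + 0) = lin ((l:ℝ)+1+(i+1)) (a-y) := by
    congr 1 <;> ring
  have E3 : lin (1 + (i:ℝ) - 1/2 + (l + 1)) (0 + 2 * a - (-x-y) + 0) = lin ((l:ℝ)+1+(i+1/2)) (2*a+x+y) := by
    congr 1 <;> ring
  rw [E0, E1, E2, E3] at key
  have key := key (by rw [lin_mul_inv (by positivity), one]) (by rw [lin_mul_inv (by positivity), one])
    (by rw [lin_mul_inv (by positivity), one]) (by rw [lin_mul_inv (by positivity), one])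
  have d1 : rho a x y i * uu a x y (i+1) l = lin ((l:ℝ)+(i+1)) (2*a) * lin ((i:ℝ)+1) (-x-y) *
      lin ((i:ℝ)+1/2) (a+x) * lin ((i:ℝ)+1/2) (a+y) * (lin ((l:ℝ)+1+(i+1)) (a-x))⁻¹ *
      (lin ((l:ℝ)+1+(i+1)) (a-y))⁻¹ * (lin ((l:ℝ)+1+(i+1/2)) (2*a+x+y))⁻¹ * (lin ((i:ℝ)+1/2) 0)⁻¹
      * uu a x y i l := by
    unfold rho uu
    have s1 := pr_shift ((i:ℝ)+1) (2*a) l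
    have s2 := ipr_shift ((i:ℝ)+1) (a-x) (l+1)
    have s3 := ipr_shift ((i:ℝ)+1) (a-y) (l+1)
    have s4 := ipr_shift ((i:ℝ)+1/2) (2*a+x+y) (l+1)
    have t1 : ((i+1:ℕ):ℝ)+1/2 = (i:ℝ)+1/2+1 := by push_cast; ring
    have t2 : ((i+1:ℕ):ℝ)+1 = (i:ℝ)+1+1 := by push_cast; ring
    have t3 : ((l+1:ℕ):ℝ) = (l:ℝ)+1 := by push_cast; ring
    rw [t3] at s2 s3 s4
    rw [t1, t2]
    calc _ = (lin ((i:ℝ)+1) (2*a) * pr ((i:ℝ)+1+1) (2*a) l)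
        * ((lin ((i:ℝ)+1) (a-x))⁻¹ * ipr ((i:ℝ)+1+1) (a-x) (l+1))
        * ((lin ((i:ℝ)+1) (a-y))⁻¹ * ipr ((i:ℝ)+1+1) (a-y) (l+1))
        * ((lin ((i:ℝ)+1/2) (2*a+x+y))⁻¹ * ipr ((i:ℝ)+1/2+1) (2*a+x+y) (l+1))
        * lin ((i:ℝ)+1) (-x-y) * lin ((i:ℝ)+1/2) (a+x) * lin ((i:ℝ)+1/2) (a+y) * (lin ((i:ℝ)+1/2) 0)⁻¹
        * C (1 / ph 1 (l+1)) * pr 1 (a+x) l * pr 1 (a+y) l * pr (1/2) (-x-y) (l+1) := by ring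
      _ = _ := by rw [s1, s2, s3, s4]; ring
  have d2 : C ((l:ℝ)+1+1) * uu a x y i (l+1) = lin ((l:ℝ)+(i+1)) (2*a) * lin ((l:ℝ)+1) (a+x) *
      lin ((l:ℝ)+1) (a+y) * lin ((l:ℝ)+1+1/2) (-x-y) * (lin ((l:ℝ)+1+(i+1)) (a-x))⁻¹ *
      (lin ((l:ℝ)+1+(i+1)) (a-y))⁻¹ * (lin ((l:ℝ)+1+(i+1/2)) (2*a+x+y))⁻¹ * uu a x y i l := by
    unfold uu
    have p := ph_pos (k := 1) (by norm_num) (l+1)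
    have c : C (1 / ph 1 (l+1)) = C ((l:ℝ)+1+1) * C (1 / ph 1 (l+1+1)) := by
      rw [← map_mul, ph_one_succ (l+1)]; congr 1; push_cast; field_simp
    rw [c]
    simp only [pr_succ, ipr_succ]
    push_cast
    ring
  unfold hh gm
  have F1 : lin ((i:ℝ) + 2 * (l + 1)) (2 * a + 2 * 0) = lin ((i:ℝ) + 2 * (l + 1)) (2 * a) := by congr 1; ring
  have F2 : lin ((i+1:ℕ) + 2 * ((l:ℝ) + 1)) (2 * a) = lin ((i:ℝ) + 2 * (l + 1) + 1) (2 * a + 2 * 0 + 0) := by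
    congr 1 <;> push_cast <;> ring
  have F3 : lin ((l:ℝ)+(i+1)) (2*a) = lin ((i:ℝ) + (l+1)) (2*a+0) := by congr 1 <;> ring
  have F4 : lin ((i:ℝ)+1) (-x-y) = lin (1+(i:ℝ)-0-0) (0+2*a-(a+x)-(a+y)) := by congr 1 <;> ring
  have F5 : lin ((i:ℝ)+1/2) (a+x) = lin (1+(i:ℝ)-0-1/2) (0+2*a-(a+y)-(-x-y)) := by congr 1 <;> ring
  have F6 : lin ((i:ℝ)+1/2) (a+y) = lin (1+(i:ℝ)-0-1/2) (0+2*a-(a+x)-(-x-y)) := by congr 1 <;> ring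
  have F7 : lin ((l:ℝ)+1) (a+x) = lin (0+((l:ℝ)+1)) (a+x+0) := by congr 1 <;> ring
  have F8 : lin ((l:ℝ)+1) (a+y) = lin (0+((l:ℝ)+1)) (a+y+0) := by congr 1 <;> ring
  have F9 : lin ((l:ℝ)+1+1/2) (-x-y) = lin (1/2+((l:ℝ)+1)) (-x-y+0) := by congr 1 <;> ring
  have F10 : lin ((l+1:ℕ)+1+2*(i:ℝ)+1/2) (2*a) = lin ((l:ℝ)+1+1+(1+2*i-0-0-1/2)) (0+0+(0+2*(2*a)-(a+x)-(a+y)-(-x-y))) := by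
    congr 1 <;> push_cast <;> ring
  have F11 : lin ((l:ℝ)+1+2*(i:ℝ)+1/2) (2*a) = lin ((l:ℝ)+1+(1+2*i-0-0-1/2)) (0+(0+2*(2*a)-(a+x)-(a+y)-(-x-y))) := by
    congr 1 <;> ring
  have F12 : C ((l:ℝ)+1) = lin ((l:ℝ)+1) 0 := by simp [lin]
  have F13 : C (((l+1:ℕ):ℝ)+1) = C ((l:ℝ)+1+1) := by push_cast; rfl
  rw [F3, F4, F5, F6] at d1
  rw [F3, F7, F8, F9] at d2
  rw [F1] at key
  rw [F2, F10, F11, F12, F13]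
  linear_combination key - lin ((i:ℝ) + 2 * (l + 1) + 1) (2 * a + 2 * 0 + 0) * d1
   + (lin ((l:ℝ)+1+1+(1+2*i-0-0-1/2)) (0+0+(0+2*(2*a)-(a+x)-(a+y)-(-x-y))) * (lin ((i:ℝ)+1/2) 0)⁻¹) * d2

lemma rho_id (i : ℕ) : 1 - rho a x y i = lin 0 (a+x) * lin 0 (a+y) * gm a x y i 0 := by
  have hi : (0:ℝ) ≤ i := by positivity
  have one : (1 : PowerSeries ℝ) = lin 1 0 := by simp [lin]
  have two : ∀ k z : ℝ, (2 : PowerSeries ℝ) * lin k z = lin (2*k) (2*z) := by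
    intro k z; rw [two_mul, lin_add]; congr 1 <;> ring
  have key : ∀ (A c d e I1 I2 I3 I0 : PowerSeries ℝ)
    (h0 : (1+A-c-d-e)*I0 = 1) (h1 : (1+A-c)*I1 = 1) (h2 : (1+A-d)*I2 = 1)
    (h3 : (1+A-e)*I3 = 1), 1 - (1+A)*(1+A-c-d)*(1+A-d-e)*(1+A-c-e)*I1*I2*I3*I0
      = - (c*d*(1+(1+2*A-c-d-e))*I0*(e*I1*I2*I3)) := by
    intro A c d e I1 I2 I3 I0 h0 h1 h2 h3
    have hall : (1+A-c)*I1*((1+A-d)*I2)*((1+A-e)*I3)*((1+A-c-d-e)*I0) = 1 := by rw [h0,h1,h2,h3]; ring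
    linear_combination - hall
  have key := key (lin (i:ℝ) (2*a)) (lin 0 (a+x)) (lin 0 (a+y)) (lin (1/2) (-x-y))
    (lin ((i:ℝ)+1) (a-x))⁻¹ (lin ((i:ℝ)+1) (a-y))⁻¹
    (lin ((i:ℝ)+1/2) (2*a+x+y))⁻¹ (lin ((i:ℝ)+1/2) 0)⁻¹
  rw [one] at key
  simp only [two, lin_add, lin_sub] at key
  have E0 : lin (1 + (i:ℝ) - 0 - 0 - 1 / 2) (0 + 2 * a - (a + x) - (a + y) - (-x - y)) = lin ((i:ℝ)+1/2) 0 := by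
    congr 1 <;> ring
  have E1 : lin (1 + (i:ℝ) - 0) (0 + 2 * a - (a + x)) = lin ((i:ℝ)+1) (a-x) := by
    congr 1 <;> ring
  have E2 : lin (1 + (i:ℝ) - 0) (0 + 2 * a - (a + y)) = lin ((i:ℝ)+1) (a-y) := by
    congr 1 <;> ring
  have E3 : lin (1 + (i:ℝ) - 1/2) (0 + 2 * a - (-x-y)) = lin ((i:ℝ)+1/2) (2*a+x+y) := by
    congr 1 <;> ring
  rw [E0, E1, E2, E3] at key
  have key := key (by rw [lin_mul_inv (by positivity), one]) (by rw [lin_mul_inv (by positivity), one])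
    (by rw [lin_mul_inv (by positivity), one]) (by rw [lin_mul_inv (by positivity), one])
  rw [← one] at key
  unfold rho gm uu
  have F0 : lin ((i:ℝ)+1) (2*a) = lin (1+(i:ℝ)) (0+2*a) := by congr 1 <;> ring
  have F4 : lin ((i:ℝ)+1) (-x-y) = lin (1+(i:ℝ)-0-0) (0+2*a-(a+x)-(a+y)) := by congr 1 <;> ring
  have F5 : lin ((i:ℝ)+1/2) (a+x) = lin (1+(i:ℝ)-0-1/2) (0+2*a-(a+y)-(-x-y)) := by congr 1 <;> ring
  have F6 : lin ((i:ℝ)+1/2) (a+y) = lin (1+(i:ℝ)-0-1/2) (0+2*a-(a+x)-(-x-y)) := by congr 1 <;> ring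
  have F11 : lin (((0:ℕ):ℝ)+1+2*(i:ℝ)+1/2) (2*a) = lin (1+(1+2*(i:ℝ)-0-0-1/2)) (0+(0+2*(2*a)-(a+x)-(a+y)-(-x-y))) := by
    congr 1 <;> push_cast <;> ring
  have F12 : C (((0:ℕ):ℝ)+1) = (1 : PowerSeries ℝ) := by simp
  have F13 : C (1/ph 1 (0+1)) = (1 : PowerSeries ℝ) := by simp [ph]
  rw [F0, F4, F5, F6, F11, F12, F13]
  simp only [pr_succ, ipr_succ]
  simp only [pr, ipr, range_zero, prod_empty, Nat.cast_zero, zero_add] at key ⊢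
  linear_combination key

lemma S_step (K i : ℕ) : 1 + lin 0 (a+x) * lin 0 (a+y) * ∑ l ∈ range K, hh a x y i l
    = rho a x y i * (1 + lin 0 (a+x) * lin 0 (a+y) * ∑ l ∈ range K, hh a x y (i+1) l)
     + lin 0 (a+x) * lin 0 (a+y) * gm a x y i K := by
  have h1 : ∑ l ∈ range K, hh a x y i l - rho a x y i * ∑ l ∈ range K, hh a x y (i+1) l
      = gm a x y i K - gm a x y i 0 := by
    rw [Finset.mul_sum, ← Finset.sum_sub_distrib, ← Finset.sum_range_sub]
    exact Finset.sum_congr rfl fun l _ => hh_step a x y i l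
  linear_combination (lin 0 (a+x) * lin 0 (a+y)) * h1 + rho_id a x y i

lemma S_iter (K M : ℕ) : 1 + lin 0 (a+x) * lin 0 (a+y) * ∑ l ∈ range K, hh a x y 0 l
    = PP a x y M * (1 + lin 0 (a+x) * lin 0 (a+y) * ∑ l ∈ range K, hh a x y M l)
     + lin 0 (a+x) * lin 0 (a+y) * ∑ i ∈ range M, PP a x y i * gm a x y i K := by
  induction M with
  | zero => simp [PP, pr, ipr]
  | succ M ih =>
    rw [ih, Finset.sum_range_succ, PP_succ]
    linear_combination (PP a x y M) * S_step a x y K M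

end walk

end
end WZ

namespace WZ
open PowerSeries Finset

noncomputable section

lemma ph_mono {k k' : ℝ} (hk : 0 < k) (h : k ≤ k') (n : ℕ) : ph k n ≤ ph k' n :=
  Finset.prod_le_prod (fun i _ => by positivity) (fun i _ => by linarith)

/-- ratio `l! / (i+1)_{l+1}` -/
def ww (i l : ℕ) : ℝ := ph 1 l / ph ((i:ℝ)+1) (l+1)

lemma ww_nonneg (i l : ℕ) : 0 ≤ ww i l :=
  div_nonneg (ph_pos (by norm_num) _).le (ph_pos (by positivity) _).le

lemma ww0 (i l : ℕ) : ww i l ≤ 1 / ((l:ℝ)+1) := by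
  unfold ww
  have p := ph_pos (k := 1) (by norm_num) l
  rw [div_le_div_iff₀ (ph_pos (by positivity) _) (by positivity), one_mul, ← ph_one_succ]
  exact ph_mono (by norm_num) (by simp) _

lemma ww1 (i l : ℕ) (hi : 1 ≤ i) : ww i l ≤ 1 / ((l:ℝ)+1)^2 := by
  unfold ww
  have p := ph_pos (k := 1) (by norm_num) l
  have hi' : (1:ℝ) ≤ i := by exact_mod_cast hi
  rw [div_le_div_iff₀ (ph_pos (by positivity) _) (by positivity), one_mul]
  have h1 : ph (1+1) (l+1) ≤ ph ((i:ℝ)+1) (l+1) := ph_mono (by norm_num) (by linarith) _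
  refine le_trans ?_ h1
  have h2 : ∀ l : ℕ, ph (1+1) l = ph 1 (l+1) := by
    intro l
    induction l with
    | zero => simp [ph]
    | succ l ih => rw [ph_succ, ih, ph_succ 1 (l+1)]; push_cast; ring
  rw [h2, ph_succ, ph_succ]
  push_cast
  have : (0:ℝ) ≤ l := by positivity
  nlinarith [mul_pos p (show (0:ℝ) < (l:ℝ)+1 by positivity)]

lemma wwM0 (M : ℕ) : ww M 0 ≤ 1 / ((M:ℝ)+1) := by
  unfold ww; simp [ph]

lemma wwM (M l : ℕ) : ww M (l+1) ≤ 1 / ((M:ℝ)+1)^2 := by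
  unfold ww
  have hM : (0:ℝ) ≤ M := by positivity
  rw [div_le_div_iff₀ (ph_pos (by positivity) _) (by positivity), one_mul]
  induction l with
  | zero => simp [ph, Finset.prod_range_succ]; nlinarith
  | succ l ih =>
    rw [ph_succ _ (l+1+1), ph_succ _ (l+1)]
    have p := ph_pos (k := 1) (by norm_num) (l+1)
    have : ((l+1:ℕ):ℝ)+1 ≤ ((l+1+1:ℕ):ℝ)+((M:ℝ)+1) := by push_cast; linarith
    have := mul_le_mul ih this (by positivity) (ph_pos (by positivity) _).le
    linarith

section
variable {a x y : ℝ}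

lemma uu_bound (ha : |a| ≤ 3) (hx : |x| ≤ 3) (hy : |y| ≤ 3) (i l N : ℕ) (hN : l + 1 ≤ N) :
    nm rr (uu a x y i l) ≤ 1/(((i:ℝ)+l+1)*((l:ℝ)+1)) * ww i l * ls th N ^ 7 := by
  rw [abs_le] at ha hx hy
  have X1 : |2*a| ≤ 16 := by rw [abs_le]; constructor <;> linarith
  have X2 : |a+x| ≤ 16 := by rw [abs_le]; constructor <;> linarith
  have X3 : |a+y| ≤ 16 := by rw [abs_le]; constructor <;> linarith
  have X4 : |-x-y| ≤ 16 := by rw [abs_le]; constructor <;> linarith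
  have X5 : |a-x| ≤ 16 := by rw [abs_le]; constructor <;> linarith
  have X6 : |a-y| ≤ 16 := by rw [abs_le]; constructor <;> linarith
  have X7 : |2*a+x+y| ≤ 16 := by rw [abs_le]; constructor <;> linarith
  have hi : (0:ℝ) ≤ i := by positivity
  have k1 : (1:ℝ)/2 ≤ 1 := by norm_num
  have k2 : (1:ℝ)/2 ≤ 1/2 := le_rfl
  have k3 : (1:ℝ)/2 ≤ (i:ℝ)+1 := by linarith
  have k4 : (1:ℝ)/2 ≤ (i:ℝ)+1/2 := by linarith
  have p0 := ph_pos (k := 1) (by norm_num) (l+1)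
  have p1 := ph_pos (k := (i:ℝ)+1) (by positivity) (l+1)
  have p2 := ph_pos (k := (i:ℝ)+1/2) (by positivity) (l+1)
  have p3 := ph_pos (k := 1) (by norm_num) l
  have p4 := ph_pos (k := (i:ℝ)+1) (by positivity) l
  have p5 := ph_pos (k := 1/2) (by positivity) (l+1)
  have hls : 0 ≤ ls th N := zero_le_one.trans (one_le_ls th0 th1 N)
  unfold uu
  have := nmm (nmm (nmm (nmm (nmm (nmm (nmm (bpr (n := l) (N := N) k3 X1 (by omega)) (bC (1 / ph 1 (l+1))))
    (bpr (n := l) (N := N) k1 X2 (by omega))) (bpr (n := l) (N := N) k1 X3 (by omega)))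
    (bpr (n := l+1) (N := N) k2 X4 (by omega))) (bipr (n := l+1) (N := N) k3 X5 (by omega)))
    (bipr (n := l+1) (N := N) k3 X6 (by omega))) (bipr (n := l+1) (N := N) k4 X7 (by omega))
  refine this.trans ?_
  rw [abs_of_pos (by positivity)]
  have h1 : ph (1/2) (l+1) / ph ((i:ℝ)+1/2) (l+1) ≤ 1 := by
    rw [div_le_one p2]; exact ph_mono (by norm_num) (by linarith) _
  have h2 : 0 ≤ 1/(((i:ℝ)+l+1)*((l:ℝ)+1)) * ww i l * ls th N ^ 7 := by
    have := ww_nonneg i l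
    positivity
  have h3 := mul_le_mul_of_nonneg_left h1 h2
  rw [mul_one] at h3
  refine le_trans (le_of_eq ?_) h3
  unfold ww
  rw [ph_succ 1 l, ph_succ ((i:ℝ)+1) l]
  generalize ph (1/2) (l+1) = q1 at *
  generalize ph ((i:ℝ)+1/2) (l+1) = q2 at *
  have : (0:ℝ) < (l:ℝ)+((i:ℝ)+1) := by positivity
  have e : (i:ℝ)+l+1 = (l:ℝ)+((i:ℝ)+1) := by ring
  rw [e]
  field_simp

lemma hh_bound (ha : |a| ≤ 3) (hx : |x| ≤ 3) (hy : |y| ≤ 3) (i l N : ℕ) (hN : l + 1 ≤ N) :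
    nm rr (hh a x y i l) ≤ 3 * ww i l * ls th N ^ 7 := by
  have h1 := uu_bound ha hx hy i l N hN
  rw [abs_le] at ha
  have X1 : |2*a| ≤ 16 := by rw [abs_le]; constructor <;> linarith
  have hi : (0:ℝ) ≤ i := by positivity
  have hl : (0:ℝ) ≤ l := by positivity
  have hls : 0 ≤ ls th N := zero_le_one.trans (one_le_ls th0 th1 N)
  have hw := ww_nonneg i l
  have B : nm rr (lin ((i:ℝ)+2*(l+1)) (2*a)) ≤ 3*((i:ℝ)+l+1) := blin (by positivity) X1 (by linarith)
  refine (nmm B h1).trans ?_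
  have : 3*((i:ℝ)+l+1) * (1/(((i:ℝ)+l+1)*((l:ℝ)+1))) ≤ 3 := by
    have e : 3*((i:ℝ)+l+1) * (1/(((i:ℝ)+l+1)*((l:ℝ)+1))) = 3 / ((l:ℝ)+1) := by field_simp
    rw [e, div_le_iff₀ (by positivity)]; linarith
  have := mul_le_mul_of_nonneg_right this (show 0 ≤ ww i l * ls th N ^ 7 by positivity)
  linarith

lemma gm_bound (ha : |a| ≤ 3) (hx : |x| ≤ 3) (hy : |y| ≤ 3) (i l N : ℕ) (hN : l + 1 ≤ N) :
    nm rr (gm a x y i l) ≤ 12 * ww i l * ls th N ^ 7 := by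
  have h1 := uu_bound ha hx hy i l N hN
  rw [abs_le] at ha
  have X1 : |2*a| ≤ 16 := by rw [abs_le]; constructor <;> linarith
  have hi : (0:ℝ) ≤ i := by positivity
  have hl : (0:ℝ) ≤ l := by positivity
  have hls : 0 ≤ ls th N := zero_le_one.trans (one_le_ls th0 th1 N)
  have hw := ww_nonneg i l
  have B : nm rr (lin ((l:ℝ)+1+2*i+1/2) (2*a)) ≤ (l:ℝ)+2+2*i := blin (by positivity) X1 (by linarith)
  have B2 : nm rr (lin ((i:ℝ)+1/2) 0)⁻¹ ≤ 1/((i:ℝ)+1/4) := bilin (by simp) (by positivity) (by linarith)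
  have B3 := bC ((l:ℝ)+1)
  rw [abs_of_pos (by positivity)] at B3
  have hn : nm rr (gm a x y i l) = nm rr (C ((l:ℝ)+1) * lin ((l:ℝ)+1+2*i+1/2) (2*a) * (lin ((i:ℝ)+1/2) 0)⁻¹ * uu a x y i l) := by
    unfold gm; generalize (C ((l:ℝ)+1) * _ * _ * _ : PowerSeries ℝ) = f; simp [nm]
  rw [hn]
  refine (nmm (nmm (nmm B3 B) B2) h1).trans ?_
  have : ((l:ℝ)+1) * ((l:ℝ)+2+2*i) * (1/((i:ℝ)+1/4)) * (1/(((i:ℝ)+l+1)*((l:ℝ)+1))) ≤ 12 := by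
    have e : ((l:ℝ)+1) * ((l:ℝ)+2+2*i) * (1/((i:ℝ)+1/4)) * (1/(((i:ℝ)+l+1)*((l:ℝ)+1))) = ((l:ℝ)+2+2*i) / (((i:ℝ)+1/4) * ((i:ℝ)+l+1)) := by field_simp
    rw [e, div_le_iff₀ (by positivity)]; nlinarith
  have := mul_le_mul_of_nonneg_right this (show 0 ≤ ww i l * ls th N ^ 7 by positivity)
  linarith

lemma PP_bound (ha : |a| ≤ 3) (hx : |x| ≤ 3) (hy : |y| ≤ 3) (i N : ℕ) (hN : i ≤ N) :
    nm rr (PP a x y i) ≤ ls th N ^ 8 := by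
  rw [abs_le] at ha hx hy
  have X1 : |2*a| ≤ 16 := by rw [abs_le]; constructor <;> linarith
  have X2 : |a+x| ≤ 16 := by rw [abs_le]; constructor <;> linarith
  have X3 : |a+y| ≤ 16 := by rw [abs_le]; constructor <;> linarith
  have X4 : |-x-y| ≤ 16 := by rw [abs_le]; constructor <;> linarith
  have X5 : |a-x| ≤ 16 := by rw [abs_le]; constructor <;> linarith
  have X6 : |a-y| ≤ 16 := by rw [abs_le]; constructor <;> linarith
  have X7 : |2*a+x+y| ≤ 16 := by rw [abs_le]; constructor <;> linarith
  have X8 : |(0:ℝ)| ≤ 16 := by simp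
  have k1 : (1:ℝ)/2 ≤ 1 := by norm_num
  have k2 : (1:ℝ)/2 ≤ 1/2 := le_rfl
  have p0 := ph_pos (k := 1) (by norm_num) i
  have p1 := ph_pos (k := 1/2) (by norm_num) i
  unfold PP
  refine (nmm (nmm (nmm (nmm (nmm (nmm (nmm (bpr (n := i) (N := N) k1 X1 hN) (bpr (n := i) (N := N) k1 X4 hN))
    (bpr (n := i) (N := N) k2 X2 hN)) (bpr (n := i) (N := N) k2 X3 hN)) (bipr (n := i) (N := N) k1 X5 hN))
    (bipr (n := i) (N := N) k1 X6 hN)) (bipr (n := i) (N := N) k2 X7 hN)) (bipr (n := i) (N := N) k2 X8 hN)).trans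
    (le_of_eq ?_)
  field_simp

def errA (a x y : ℝ) (K : ℕ) : PowerSeries ℝ :=
  lin 0 (a+x) * lin 0 (a+y) * (PP a x y K * ∑ l ∈ range K, hh a x y K l
    + ∑ i ∈ range K, PP a x y i * gm a x y i K)

lemma errA_bound (ha : |a| ≤ 3) (hx : |x| ≤ 3) (hy : |y| ≤ 3) (K : ℕ) :
    nm rr (errA a x y K) ≤ 30 / ((K:ℝ)+1) * Real.sqrt (2*((K:ℝ)+1)+1) := by
  set N := 2*(K+1) with hN
  have hls1 := one_le_ls th0 th1 N
  have hls : 0 ≤ ls th N := zero_le_one.trans hls1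
  set Q := ls th N with hQ
  have hK : (0:ℝ) ≤ K := by positivity
  have X2 : |a+x| ≤ 16 := by rw [abs_le] at *; constructor <;> linarith
  have X3 : |a+y| ≤ 16 := by rw [abs_le] at *; constructor <;> linarith
  have B1 : nm rr (lin 0 (a+x)) ≤ 1 := blin le_rfl X2 (by norm_num)
  have B2 : nm rr (lin 0 (a+y)) ≤ 1 := blin le_rfl X3 (by norm_num)
  have sumw : ∀ f : ℕ → ℝ, f 0 ≤ 1/((K:ℝ)+1) → (∀ l, f (l+1) ≤ 1/((K:ℝ)+1)^2) →
      ∑ l ∈ range K, f l ≤ 2/((K:ℝ)+1) := by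
    intro f h0 h1
    have hb : (0:ℝ) ≤ 2/((K:ℝ)+1) := by positivity
    rcases Nat.eq_zero_or_pos K with h | h
    · have e : range K = ∅ := by rw [h]; rfl
      rw [e, sum_empty]; exact hb
    · obtain ⟨J, hJ⟩ : ∃ J, K = J+1 := ⟨K-1, by omega⟩
      have e : range K = range (J+1) := by rw [hJ]
      rw [e, Finset.sum_range_succ']
      have h2 := Finset.sum_le_sum (s := range J) fun l _ => h1 l
      rw [sum_const, card_range, nsmul_eq_mul] at h2
      have h3 : (J:ℝ) * (1/((K:ℝ)+1)^2) ≤ 1/((K:ℝ)+1) := by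
        rw [mul_one_div, div_le_div_iff₀ (by positivity) (by positivity)]
        have : (J:ℝ) ≤ K := by rw [hJ]; push_cast; linarith
        nlinarith
      have e2 : 2/((K:ℝ)+1) = 1/((K:ℝ)+1)+1/((K:ℝ)+1) := by ring
      linarith
  have C1 : nm rr (∑ l ∈ range K, hh a x y K l) ≤ 6/((K:ℝ)+1) * Q^7 := by
    refine (nm_sum rr0 _ _).trans ?_
    have : ∀ l ∈ range K, nm rr (hh a x y K l) ≤ (3 * Q^7) * ww K l := fun l hl => by
      have := mem_range.mp hl
      exact (hh_bound ha hx hy K l N (by omega)).trans (le_of_eq (by ring))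
    refine (Finset.sum_le_sum this).trans ?_
    rw [← Finset.mul_sum]
    have := mul_le_mul_of_nonneg_left (sumw (fun l => ww K l) (wwM0 K) (wwM K)) (show 0 ≤ 3 * Q^7 by positivity)
    exact this.trans (le_of_eq (by ring))
  have C2 : nm rr (∑ i ∈ range K, PP a x y i * gm a x y i K) ≤ 24/((K:ℝ)+1) * Q^15 := by
    refine (nm_sum rr0 _ _).trans ?_
    have : ∀ i ∈ range K, nm rr (PP a x y i * gm a x y i K) ≤ (12 * Q^15) * ww i K := fun i hi => by
      have := mem_range.mp hi
      exact (nmm (PP_bound ha hx hy i N (by omega)) (gm_bound ha hx hy i K N (by omega))).trans (le_of_eq (by ring))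
    refine (Finset.sum_le_sum this).trans ?_
    rw [← Finset.mul_sum]
    have := mul_le_mul_of_nonneg_left (sumw (fun i => ww i K) (ww0 0 K) (fun l => ww1 (l+1) K (by omega))) (show 0 ≤ 12 * Q^15 by positivity)
    exact this.trans (le_of_eq (by ring))
  unfold errA
  refine (nmm (nmm B1 B2) (nma (nmm (PP_bound ha hx hy K N (by omega)) C1) C2)).trans ?_
  have h15 : Q^15 ≤ Real.sqrt (2*((K:ℝ)+1)+1) := by
    have := ls_bound (p := 15) (by norm_num) N
    rw [hN] at this; push_cast at this; exact this
  have := mul_le_mul_of_nonneg_left h15 (show 0 ≤ 30 / ((K:ℝ)+1) by positivity)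
  refine le_trans (le_of_eq ?_) this
  ring

theorem A_walk (ha : |a| ≤ 3) (hx : |x| ≤ 3) (hy : |y| ≤ 3) :
    Tendsto (fun K : ℕ => (a+x)*(a+y) * ∑ l ∈ range K, coeff 4 (hh a x y 0 l) - coeff 6 (PP a x y K))
      atTop (𝓝 0) := by
  have h := tendsto_coeff_zero (r := rr) (by norm_num [rr]) (errA a x y)
    (squeeze_zero (fun _ => nm_nonneg rr0 _) (fun K => errA_bound ha hx hy K) (tendsto_sqrt_div 30))
    (i := 6) (by norm_num)
  refine h.congr fun K => ?_
  have h1 := S_iter a x y K K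
  have h2 : C ((a+x)*(a+y)) * (X^2 * ∑ l ∈ range K, hh a x y 0 l) = PP a x y K - 1 + errA a x y K := by
    unfold errA
    have e : ∀ z : ℝ, lin 0 z = C z * X := by intro z; simp [lin]
    rw [e, e] at *
    rw [map_mul]
    linear_combination h1
  have h3 := congrArg (coeff 6) h2
  rw [coeff_C_mul, coeff_X_pow_mul', if_pos (by norm_num), map_add, map_sub, coeff_one, if_neg (by norm_num), map_sum] at h3
  rw [h3]; ring

end

/-- zeta values -/
def zz (j : ℕ) : ℝ := ∑' n : ℕ, 1 / ((n:ℝ)+1)^j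

lemma hs_one_tendsto {j : ℕ} (hj : 2 ≤ j) : Tendsto (fun n => hs 1 j n) atTop (𝓝 (zz j)) := by
  have h : Summable (fun n : ℕ => 1 / ((n:ℝ)+1)^j) := by
    have := (summable_nat_add_iff 1).mpr (Real.summable_one_div_nat_pow.mpr (show 1 < j by omega))
    simpa using this
  exact h.hasSum.tendsto_sum_nat

lemma hs_double (j n : ℕ) : hs 1 j (2*n) = (1/2)^j * (hs 1 j n + hs (1/2) j n) := by
  induction n with
  | zero => simp [hs]
  | succ n ih =>
    have e : 2*(n+1) = 2*n+1+1 := by ring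
    have s : ∀ k n, hs k j (n+1) = hs k j n + 1/((n:ℝ)+k)^j := fun k n => by
      unfold hs; rw [Finset.sum_range_succ]
    rw [e, s, s, ih, s, s]
    push_cast
    have e1 : ((n:ℝ)+1)^j = (1/2)^j * (2*n+1+1)^j := by rw [← mul_pow]; congr 1; ring
    have e2 : ((n:ℝ)+1/2)^j = (1/2)^j * (2*n+1)^j := by rw [← mul_pow]; congr 1; ring
    rw [e1, e2]
    have : (0:ℝ) < 2*n+1 := by positivity
    field_simp
    ring

lemma hs_half_tendsto {j : ℕ} (hj : 2 ≤ j) :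
    Tendsto (fun n => hs (1/2) j n) atTop (𝓝 ((2^j-1) * zz j)) := by
  have h1 := hs_one_tendsto hj
  have h2 : Tendsto (fun n : ℕ => hs 1 j (2*n)) atTop (𝓝 (zz j)) :=
    h1.comp (tendsto_id.const_mul_atTop' (by norm_num : 0 < 2))
  have h3 := (h2.const_mul (2^j)).sub h1
  have e : (2:ℝ)^j * zz j - zz j = (2^j-1) * zz j := by ring
  rw [e] at h3
  refine h3.congr fun n => ?_
  rw [hs_double, ← mul_assoc, ← mul_pow]; norm_num

lemma coeff0_pr (k x : ℝ) (n : ℕ) : coeff 0 (pr k x n) = ph k n := by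
  rw [coeff_zero_eq_constantCoeff_apply, pr, map_prod, ph]
  exact Finset.prod_congr rfl fun i _ => constCoeff_lin _ _

lemma coeff0_ipr (k x : ℝ) (n : ℕ) : coeff 0 (ipr k x n) = (ph k n)⁻¹ := by
  rw [coeff_zero_eq_constantCoeff_apply, ipr, map_prod, ph, ← Finset.prod_inv_distrib]
  exact Finset.prod_congr rfl fun i _ => by rw [constantCoeff_inv, constCoeff_lin]

def pj (a x y : ℝ) (j : ℕ) : ℝ := (2*a)^j + (-x-y)^j - (a-x)^j - (a-y)^j
def qj (a x y : ℝ) (j : ℕ) : ℝ := (a+x)^j + (a+y)^j - (2*a+x+y)^j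
def sg (a x y : ℝ) (j : ℕ) : ℝ := (-1)^(j-1) * (pj a x y j + (2^j-1) * qj a x y j) * zz j

lemma PP_coeff6 (a x y : ℝ) : Tendsto (fun K => coeff 6 (PP a x y K)) atTop
    (𝓝 (sg a x y 6 / 6 + sg a x y 2 * sg a x y 4 / 8 + sg a x y 3 ^ 2 / 18 + sg a x y 2 ^ 3 / 48)) := by
  have hk1 : (0:ℝ) < 1 := by norm_num
  have hk2 : (0:ℝ) < 1/2 := by norm_num
  have LDP : ∀ K, LD (PP a x y K) _ := fun K => by
    exact (((((((LD_pr hk1 (2*a) K).mul (LD_pr hk1 (-x-y) K)).mul (LD_pr hk2 (a+x) K)).mul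
      (LD_pr hk2 (a+y) K)).mul (LD_ipr hk1 (a-x) K)).mul (LD_ipr hk1 (a-y) K)).mul
      (LD_ipr hk2 (2*a+x+y) K)).mul (LD_ipr hk2 0 K)
  have hc : ∀ K j, coeff j (∑ i ∈ range K, gs (i + 1) (2 * a) + ∑ i ∈ range K, gs (i + 1) (-x - y) +
      ∑ i ∈ range K, gs (i + 1 / 2) (a + x) + ∑ i ∈ range K, gs (i + 1 / 2) (a + y) +
      -∑ i ∈ range K, gs (i + 1) (a - x) + -∑ i ∈ range K, gs (i + 1) (a - y) +
      -∑ i ∈ range K, gs (i + 1 / 2) (2 * a + x + y) + -∑ i ∈ range K, gs (i + 1 / 2) 0)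
      = (-1)^j * (pj a x y (j+1) * hs 1 (j+1) K + qj a x y (j+1) * hs (1/2) (j+1) K) := by
    intro K j
    simp only [map_add, map_neg, coeff_sum_gs hk1, coeff_sum_gs hk2]
    unfold pj qj
    ring
  have h0 : ∀ K, coeff 0 (PP a x y K) = 1 := by
    intro K
    have p0 := ph_pos (k := 1) (by norm_num) K
    have p1 := ph_pos (k := 1/2) (by norm_num) K
    have e1 := fun x => coeff0_pr 1 x K
    have e2 := fun x => coeff0_ipr 1 x K
    have e3 := fun x => coeff0_pr (1/2) x K
    have e4 := fun x => coeff0_ipr (1/2) x K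
    simp only [coeff_zero_eq_constantCoeff_apply] at e1 e2 e3 e4
    rw [coeff_zero_eq_constantCoeff_apply, PP]
    simp only [map_mul, e1, e2, e3, e4]
    field_simp
  have T : ∀ j, 1 ≤ j → Tendsto (fun K => (-1:ℝ)^j * (pj a x y (j+1) * hs 1 (j+1) K + qj a x y (j+1) * hs (1/2) (j+1) K))
      atTop (𝓝 (sg a x y (j+1))) := by
    intro j hj
    have := (((hs_one_tendsto (j := j+1) (by omega)).const_mul (pj a x y (j+1))).add
      ((hs_half_tendsto (j := j+1) (by omega)).const_mul (qj a x y (j+1)))).const_mul ((-1:ℝ)^j)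
    convert this using 2
    unfold sg
    rw [Nat.add_sub_cancel]; ring
  have hz : pj a x y 1 = 0 ∧ qj a x y 1 = 0 := by unfold pj qj; constructor <;> ring
  have := ((((T 5 (by norm_num)).div_const 6).add (((T 1 (by norm_num)).mul (T 3 (by norm_num))).div_const 8)).add
    (((T 2 (by norm_num)).pow 2).div_const 18)).add (((T 1 (by norm_num)).pow 3).div_const 48)
  refine this.congr fun K => ?_
  rw [LD_coeff6 (LDP K) (by rw [hc, hz.1, hz.2]; ring), h0, hc, hc, hc, hc]
  ring

theorem closed_form {a x y : ℝ} (ha : |a| ≤ 3) (hx : |x| ≤ 3) (hy : |y| ≤ 3)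
    (h : (a+x)*(a+y) ≠ 0) :
    Tendsto (fun K : ℕ => ∑ l ∈ range K, coeff 4 (hh a x y 0 l)) atTop
     (𝓝 ((sg a x y 6 / 6 + sg a x y 2 * sg a x y 4 / 8 + sg a x y 3 ^ 2 / 18 + sg a x y 2 ^ 3 / 48)
      / ((a+x)*(a+y)))) := by
  have h1 := ((A_walk ha hx hy).add (PP_coeff6 a x y)).div_const ((a+x)*(a+y))
  rw [zero_add] at h1
  refine h1.congr fun K => ?_
  rw [sub_add_cancel, mul_div_cancel_left₀ _ h]

end
end WZ

namespace WZ
open PowerSeries Finset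

noncomputable section

lemma ipr_zero (k : ℝ) (hk : 0 < k) (n : ℕ) : ipr k 0 n = C (1 / ph k n) := by
  induction n with
  | zero => simp [ipr, ph]
  | succ n ih =>
    rw [ipr_succ, ih, ph_succ]
    have h : (n:ℝ)+k ≠ 0 := by positivity
    have p := ph_pos hk n
    have e : (lin ((n:ℝ)+k) 0)⁻¹ = C (1/((n:ℝ)+k)) := by
      have h1 := lin_mul_inv h 0
      have h2 : C (1/((n:ℝ)+k)) * lin ((n:ℝ)+k) 0 = 1 := by
        simp only [lin, map_zero, zero_mul, add_zero]
        rw [← map_mul, one_div_mul_cancel h, map_one]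
      calc _ = (C (1/((n:ℝ)+k)) * lin ((n:ℝ)+k) 0) * (lin ((n:ℝ)+k) 0)⁻¹ := by rw [h2, one_mul]
        _ = _ := by rw [mul_assoc, h1, mul_one]
    rw [e, ← map_mul, one_div_mul_one_div]

lemma Lam_zero (b g d : ℝ) : Lam b g d 0 = 1 := by
  simp [Lam, pr, ph]

lemma Ff_B (a x y : ℝ) (l : ℕ) : Ff a a x y 0 l = hh a x y 0 l := by
  unfold Ff Uf hh uu
  rw [Lam_zero, sub_self, ipr_zero 1 (by norm_num)]
  simp only [mul_zero, zero_add, Nat.cast_zero]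
  have e1 : a + a = 2*a := by ring
  have e2 : 0 - x - y = -x-y := by ring
  have e4 : (1:ℝ) + l = l+1 := by ring
  rw [e1, e2, e4]
  ring

lemma Ff_G (a x y : ℝ) (l : ℕ) : Ff a x a y 0 l = hh a x y 0 l := by
  unfold Ff Uf hh uu
  rw [Lam_zero, sub_self, ipr_zero 1 (by norm_num)]
  simp only [mul_zero, zero_add, Nat.cast_zero]
  have e1 : a + a = 2*a := by ring
  have e2 : a - x - a - y = -x-y := by ring
  have e3 : a + x + a + y = 2*a+x+y := by ring
  have e4 : (1:ℝ) + l = l+1 := by ring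
  rw [e1, e2, e3, e4]
  ring

lemma hs_succ (k : ℝ) (j n : ℕ) : hs k j (n+1) = hs k j n + 1/((n:ℝ)+k)^j := by
  unfold hs; rw [Finset.sum_range_succ]

lemma Ff_E (b g d : ℝ) (h : b + g + d = 0) (l : ℕ) :
    coeff 4 (Ff 0 b g d 0 l) = 2 * (b*g+b*d+g*d)^2 * (1 / ((l:ℝ)+1)^6) := by
  have hk1 : (0:ℝ) < 1 := by norm_num
  have hk2 : (0:ℝ) < 1/2 := by norm_num
  have e0 : Ff 0 b g d 0 l = C (2*((l:ℝ)+1)) * (pr 1 b l * ipr 1 (-b) (l+1) * pr 1 g l * ipr 1 (-g) (l+1)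
      * pr 1 d l * ipr 1 (-d) (l+1) * pr (1/2) 0 (l+1) * ipr (1/2) 0 (l+1)) := by
    unfold Ff Uf
    rw [Lam_zero]
    simp only [mul_zero, zero_add, Nat.cast_zero, zero_sub]
    have e1 : -b-g-d = 0 := by linarith
    have e4 : (1:ℝ) + l = l+1 := by ring
    rw [e1, h, e4]
    simp only [lin, map_zero, zero_mul, add_zero]
    ring
  rw [e0, coeff_C_mul]
  have L := (((((((LD_pr hk1 b l).mul (LD_ipr hk1 (-b) (l+1))).mul (LD_pr hk1 g l)).mul
      (LD_ipr hk1 (-g) (l+1))).mul (LD_pr hk1 d l)).mul (LD_ipr hk1 (-d) (l+1))).mul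
      (LD_pr hk2 0 (l+1))).mul (LD_ipr hk2 0 (l+1))
  have h0 : coeff 0 (pr 1 b l * ipr 1 (-b) (l+1) * pr 1 g l * ipr 1 (-g) (l+1)
      * pr 1 d l * ipr 1 (-d) (l+1) * pr (1/2) 0 (l+1) * ipr (1/2) 0 (l+1)) = 1/((l:ℝ)+1)^3 := by
    have p0 := ph_pos (k := 1) (by norm_num) l
    have p1 := ph_pos (k := 1/2) (by norm_num) (l+1)
    have e1 := fun x n => coeff0_pr 1 x n
    have e2 := fun x n => coeff0_ipr 1 x n
    have e3 := fun x n => coeff0_pr (1/2) x n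
    have e4 := fun x n => coeff0_ipr (1/2) x n
    simp only [coeff_zero_eq_constantCoeff_apply] at e1 e2 e3 e4
    rw [coeff_zero_eq_constantCoeff_apply]
    simp only [map_mul, e1, e2, e3, e4, ph_one_succ]
    field_simp
  rw [LD_coeff4 L, h0]
  simp only [map_add, map_neg, coeff_sum_gs hk1, coeff_sum_gs hk2, hs_succ]
  have hb : b = -g-d := by linarith
  subst hb
  have : (0:ℝ) < (l:ℝ)+1 := by positivity
  field_simp
  ring

theorem val_E (b g d : ℝ) (h : b + g + d = 0) :
    Tendsto (fun K : ℕ => ∑ l ∈ range K, coeff 4 (Ff 0 b g d 0 l)) atTop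
     (𝓝 (2 * (b*g+b*d+g*d)^2 * zz 6)) := by
  refine ((hs_one_tendsto (j := 6) (by norm_num)).const_mul (2 * (b*g+b*d+g*d)^2)).congr fun K => ?_
  rw [hs, Finset.mul_sum]
  exact Finset.sum_congr rfl fun l _ => (Ff_E b g d h l).symm

/-- limit value on the two closed-form slices -/
def om (a x y : ℝ) : ℝ := (sg a x y 6 / 6 + sg a x y 2 * sg a x y 4 / 8 + sg a x y 3 ^ 2 / 18
  + sg a x y 2 ^ 3 / 48) / ((a+x)*(a+y))

theorem TB {a x y : ℝ} (ha : |a| ≤ 3) (hx : |x| ≤ 3) (hy : |y| ≤ 3) (h : (a+x)*(a+y) ≠ 0) :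
    Tendsto (fun K : ℕ => ∑ m ∈ range K, coeff 4 (Tf a a x y m)) atTop (𝓝 (om a x y)) := by
  refine F_walk ha ha hx hy (by norm_num) ?_
  simp only [Ff_B]
  exact closed_form ha hx hy h

theorem TG {a x y : ℝ} (ha : |a| ≤ 3) (hx : |x| ≤ 3) (hy : |y| ≤ 3) (h : (a+x)*(a+y) ≠ 0) :
    Tendsto (fun K : ℕ => ∑ m ∈ range K, coeff 4 (Tf a x a y m)) atTop (𝓝 (om a x y)) := by
  refine F_walk ha hx ha hy (by norm_num) ?_
  simp only [Ff_G]
  exact closed_form ha hx hy h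

theorem TE {b g d : ℝ} (hb : |b| ≤ 3) (hx : |g| ≤ 3) (hy : |d| ≤ 3) (h : b + g + d = 0) :
    Tendsto (fun K : ℕ => ∑ m ∈ range K, coeff 4 (Tf 0 b g d m)) atTop
      (𝓝 (2 * (b*g+b*d+g*d)^2 * zz 6)) := by
  refine F_walk (by simp) hb hx hy (by norm_num) ?_
  exact val_E b g d h

lemma zz2 : zz 2 = Real.pi^2/6 := by
  have h := hasSum_zeta_two
  have h2 := (hasSum_nat_add_iff' 1).mpr h
  simp at h2
  simpa [zz] using h2.tsum_eq
lemma zz4 : zz 4 = Real.pi^4/90 := by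
  have h := hasSum_zeta_four
  have h2 := (hasSum_nat_add_iff' 1).mpr h
  simp at h2
  simpa [zz] using h2.tsum_eq
lemma zz6 : zz 6 = Real.pi^6/945 := by
  have h := hasSum_zeta_nat (k := 3) (by norm_num)
  have h2 := (hasSum_nat_add_iff' 1).mpr h
  have hb : bernoulli 6 = 1/42 := by
    rw [bernoulli_eq_bernoulli'_of_ne_one (by norm_num), bernoulli'_def]
    simp [Finset.sum_range_succ, bernoulli'_zero, bernoulli'_one, bernoulli'_two, bernoulli'_three, bernoulli'_four,
      bernoulli'_eq_zero_of_odd (n := 5) (by decide) (by norm_num), Nat.choose]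
    norm_num
  norm_num [hb, Nat.factorial] at h2
  have h3 := h2.tsum_eq
  unfold zz
  simp only [one_div]
  rw [h3]; ring

end
end WZ

namespace WZ
open PowerSeries Finset

noncomputable section

/-- cubic coefficients of the numerator factor (`h` stands for `1/2`) -/
def c0 (h M : ℝ) : ℝ := -2*(4*M-1)*(M*(M+1)) + 2*((4*M-3)*(2*M^2) - 2*(M^2-h*(2*M)+M^2*h))
def c1 (h a b g d M : ℝ) : ℝ := -2*(4*M-1)*(a*(2*M+1)) + 2*((4*M-3)*(-2*M*(g+d))
  - 2*(b*h - M*(g+d) - ((-g-d)*(2*M) - h*(g+d)) + (M^2*(-g-d) - M*(g+d)*h) - b*h*(2*M)))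
def c2 (h a b g d M : ℝ) : ℝ := -2*(4*M-1)*a^2 + 2*((4*M-3)*(g^2+d^2)
  - 2*(b*(-b-g-d)+g*d-(g+d)^2 + (g*d*h + M*(g+d)^2) - (2*M*b*(-b-g-d) - b*h*(g+d))))
def c3 (b g d : ℝ) : ℝ := -4*(-g*d*(g+d) + b*(-b-g-d)*(g+d))

def n0 (h M : ℝ) : ℝ := (4*M-3)*(4*M-1)*(8*M^3) - c0 h M*(M*(M+h))
def n1 (h a b g d M : ℝ) : ℝ := (4*M-3)*(4*M-1)*(4*M^2*(2*a+a-g+a-d))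
  - (c1 h a b g d M*(M*(M+h)) + c0 h M*(M*(a-b-g-d)+(M+h)*(a+b)))
def n2 (h a b g d M : ℝ) : ℝ := (4*M-3)*(4*M-1)*(2*M*(2*a*(a-g)+2*a*(a-d)+(a-g)*(a-d)))
  - (c2 h a b g d M*(M*(M+h)) + c1 h a b g d M*(M*(a-b-g-d)+(M+h)*(a+b))
    + c0 h M*((a+b)*(a-b-g-d)))
def n3 (h a b g d M : ℝ) : ℝ := (4*M-3)*(4*M-1)*(2*a*(a-g)*(a-d))
  - (c3 b g d*(M*(M+h)) + c2 h a b g d M*(M*(a-b-g-d)+(M+h)*(a+b))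
    + c1 h a b g d M*((a+b)*(a-b-g-d)))
def n4 (h a b g d M : ℝ) : ℝ :=
  - (c3 b g d*(M*(a-b-g-d)+(M+h)*(a+b)) + c2 h a b g d M*((a+b)*(a-b-g-d)))
def n5 (a b g d : ℝ) : ℝ := - (c3 b g d*((a+b)*(a-b-g-d)))

def Nu (h a b g d M : ℝ) : PowerSeries ℝ :=
  C ((4*M-3)*(4*M-1)) * (lin (2*M) (2*a) * lin (2*M) (a-g) * lin (2*M) (a-d))
   - (C (-2*(4*M-1)) * (lin M a * lin (M+1) a)
      + 2*(C (4*M-3) * (lin M (-g)^2+lin M (-d)^2)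
       - 2*((lin 0 b*lin h (-b-g-d)+lin M (-g)*lin M (-d)-(lin 0 b+lin h (-b-g-d))*(lin M (-g)+lin M (-d)))
         +(lin M (-g)*lin M (-d)*(lin 0 b+lin h (-b-g-d))-lin 0 b*lin h (-b-g-d)*(lin M (-g)+lin M (-d))))))
     * lin M (a+b) * lin (M+h) (a-b-g-d)

lemma Nu_eq (h a b g d M : ℝ) : Nu h a b g d M = C (n0 h M) + C (n1 h a b g d M) * X
   + C (n2 h a b g d M) * X^2 + C (n3 h a b g d M) * X^3 + C (n4 h a b g d M) * X^4
   + C (n5 a b g d) * X^5 := by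
  unfold Nu n0 n1 n2 n3 n4 n5 c0 c1 c2 c3 lin
  simp only [map_add, map_sub, map_mul, map_neg, map_pow, map_ofNat, map_one, map_zero]
  ring

def Vf (a b g d : ℝ) (m : ℕ) : PowerSeries ℝ :=
  Lam b g d m * pr 1 (a+b) m * ipr 1 (a-b) (m+1) * ipr 1 (a-g) (2*m+2) * ipr 1 (a-d) (2*m+2)
   * pr (1/2) (a-b-g-d) (m+1) * ipr (1/2) (a+b+g+d) (m+1)

lemma Tf_eq (a b g d : ℝ) (m : ℕ) : Tf a b g d m =
    C (1/((4*(m:ℝ)+1)*(4*m+3))) * (Vf a b g d m * Nu (1/2) a b g d ((m:ℝ)+1)) := by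
  have hk : (4*(m:ℝ)+1) ≠ 0 := by positivity
  have hq : (4*(m:ℝ)+3) ≠ 0 := by positivity
  have e1 : C (1/((4*(m:ℝ)+1)*(4*m+3))) * C ((4*((m:ℝ)+1)-3)*(4*((m:ℝ)+1)-1)) = (1 : PowerSeries ℝ) := by
    rw [← map_mul, ← map_one C]; congr 1; field_simp; ring
  have e2 : C (1/((4*(m:ℝ)+1)*(4*m+3))) * C (-2*(4*((m:ℝ)+1)-1)) = (C (ksm m) : PowerSeries ℝ) := by
    rw [← map_mul]; congr 1; unfold ksm; field_simp; ring
  have e3 : C (1/((4*(m:ℝ)+1)*(4*m+3))) * (2 * C (4*((m:ℝ)+1)-3)) = (C (ism m) : PowerSeries ℝ) := by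
    rw [← map_ofNat C, ← map_mul, ← map_mul]; congr 1; unfold ism; field_simp; ring
  have e4 : C (1/((4*(m:ℝ)+1)*(4*m+3))) * (-4) = (C (ism m) * C (ksm m) : PowerSeries ℝ) := by
    rw [← map_ofNat C, ← map_neg, ← map_mul, ← map_mul]; congr 1; unfold ism ksm; field_simp; ring
  have hM : (2*(m:ℝ)+2) ≠ 0 := by positivity
  have i1 := lin_mul_inv hM (a-g)
  have i2 := lin_mul_inv hM (a-d)
  have hN : C (1/((4*(m:ℝ)+1)*(4*m+3))) * Nu (1/2) a b g d ((m:ℝ)+1) =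
      lin (2*(m:ℝ)+2) (2*a) * lin (2*(m:ℝ)+2) (a-g) * lin (2*(m:ℝ)+2) (a-d)
      - Pc a b g d m 0 * lin ((m:ℝ)+1) (a+b) * lin ((m:ℝ)+1+1/2) (a-b-g-d) := by
    unfold Nu Pc nu
    simp only [Nat.cast_zero, add_zero]
    rw [show 2*((m:ℝ)+1) = 2*(m:ℝ)+2 by ring, mul_add (C (ism m)), ← mul_assoc (C (ism m)), ← e4, ← e2,
      ← e3]
    linear_combination (lin (2*(m:ℝ)+2) (2*a) * lin (2*(m:ℝ)+2) (a-g) * lin (2*(m:ℝ)+2) (a-d)) * e1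
  have hp : ∀ k x, pr k x 0 = 1 := fun k x => by simp [pr]
  have hi : ∀ x, ipr 1 x (2*m+2) = ipr 1 x (2*m+1) * (lin (2*(m:ℝ)+2) x)⁻¹ := fun x => by
    rw [show 2*m+2 = (2*m+1)+1 from rfl, ipr_succ]; push_cast; ring_nf
  rw [mul_left_comm, hN]
  unfold Tf Ff Gf Uf Vf
  simp only [hp, hi, Nat.cast_zero, add_zero]
  rw [show 2*((m:ℝ)+1) = 2*(m:ℝ)+2 by ring]
  generalize Pc a b g d m 0 = PP
  generalize lin (2*(m:ℝ)+2) (a-g) = L1 at *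
  generalize lin (2*(m:ℝ)+2) (a-d) = L2 at *
  generalize L1⁻¹ = J1 at *
  generalize L2⁻¹ = J2 at *
  generalize Lam b g d m = x1
  generalize pr 1 (a+b) m = x2
  generalize ipr 1 (a-b) (m+1) = x3
  generalize ipr 1 (a-g) (2*m+1) = x4
  generalize ipr 1 (a-d) (2*m+1) = x5
  generalize pr (1/2) (a-b-g-d) (m+1) = x6
  generalize ipr (1/2) (a+b+g+d) (m+1) = x7
  linear_combination -(x1*x2*x3*x4*x5*x6*x7*lin (2*(m:ℝ)+2) (2*a)*L1*J1) * i2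
    - (x1*x2*x3*x4*x5*x6*x7*lin (2*(m:ℝ)+2) (2*a)) * i1

lemma LD_Vf (a b g d : ℝ) (m : ℕ) : ∃ s, LD (Vf a b g d m) s ∧ ∀ j, coeff j s = (-1)^j *
    ((-g-b)^(j+1) * hs 1 (j+1) m + (-d-b)^(j+1) * hs 1 (j+1) m + (b+d)^(j+1) * hs (1/2) (j+1) m
     + (b+g)^(j+1) * hs (1/2) (j+1) m + (-g-d)^(j+1) * hs 1 (j+1) (2*m)
     + (a+b)^(j+1) * hs 1 (j+1) m - (a-b)^(j+1) * hs 1 (j+1) (m+1)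
     - (a-g)^(j+1) * hs 1 (j+1) (2*m+2) - (a-d)^(j+1) * hs 1 (j+1) (2*m+2)
     + (a-b-g-d)^(j+1) * hs (1/2) (j+1) (m+1) - (a+b+g+d)^(j+1) * hs (1/2) (j+1) (m+1)) := by
  have o : (0:ℝ) < 1 := one_pos
  have h : (0:ℝ) < 1/2 := by norm_num
  have hL := ((((((LD_pr o (-g-b) m).mul (LD_pr o (-d-b) m)).mul (LD_pr h (b+d) m)).mul
    (LD_pr h (b+g) m)).mul (LD_pr o (-g-d) (2*m))).mul (LD.const (1 / ph (1/2) (2*m))))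
  have hV := (((((hL.mul (LD_pr o (a+b) m)).mul (LD_ipr o (a-b) (m+1))).mul (LD_ipr o (a-g) (2*m+2))).mul
    (LD_ipr o (a-d) (2*m+2))).mul (LD_pr h (a-b-g-d) (m+1))).mul (LD_ipr h (a+b+g+d) (m+1))
  refine ⟨_, hV, fun j => ?_⟩
  simp only [map_add, map_neg, map_zero, coeff_sum_gs o, coeff_sum_gs h]
  ring

lemma ph_half (n : ℕ) : ph (1/2) n * (4^n * (n.factorial:ℝ)) = ((2*n).factorial : ℝ) := by
  induction n with
  | zero => simp [ph]
  | succ n ih =>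
    rw [ph_succ, show 2*(n+1) = 2*n+1+1 by ring, Nat.factorial_succ, Nat.factorial_succ, Nat.factorial_succ]
    push_cast
    rw [← ih]; ring

lemma coeff0_Vf (a b g d : ℝ) (m : ℕ) : coeff 0 (Vf a b g d m) =
    1 / (((2*m).centralBinom : ℝ) * (((m:ℝ)+1) * (2*m+1)^2 * (2*m+2)^2)) := by
  have hc : (((2*m).centralBinom : ℝ)) * ((2*m).factorial * (2*m).factorial) = ((4*m).factorial : ℝ) := by
    have := Nat.choose_mul_factorial_mul_factorial (show 2*m ≤ 2*(2*m) by omega)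
    rw [← Nat.centralBinom_eq_two_mul_choose, show 2*(2*m) - 2*m = 2*m by omega] at this
    rw [show 4*m = 2*(2*m) by ring, ← this]; push_cast; ring
  have h1 := ph_half m
  have h2 := ph_half (2*m)
  rw [show 2*(2*m) = 4*m by ring, ← hc] at h2
  have p1 : (((2*m).centralBinom : ℝ)) ≠ 0 := by exact_mod_cast (Nat.centralBinom_pos _).ne'
  have p2 : (((2*m).factorial : ℝ)) ≠ 0 := by exact_mod_cast (Nat.factorial_pos _).ne'
  have p3 : (((m).factorial : ℝ)) ≠ 0 := by exact_mod_cast (Nat.factorial_pos _).ne'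
  have q1 : ph (1/2) m = (2*m).factorial / (4^m * m.factorial) := by
    rw [eq_div_iff (by positivity), h1]
  have q2 : ph (1/2) (2*m) = (2*m).centralBinom * (2*m).factorial / 4^(2*m) := by
    rw [eq_div_iff (by positivity)]
    apply mul_right_cancel₀ p2
    linear_combination h2
  have q3 : ph (1/2) (m+1) ≠ 0 := by
    rw [ph_succ, q1]; positivity
  unfold Vf Lam
  simp only [coeff_zero_eq_constantCoeff, map_mul]
  simp only [← coeff_zero_eq_constantCoeff, coeff0_pr, coeff0_ipr, coeff_zero_C]
  rw [show 2*m+2 = 2*m+1+1 by ring, ph_one_succ (2*m+1), ph_one_succ (2*m), ph_one_succ m, q2, ph_one, ph_one, q1]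
  push_cast
  have : (4:ℝ)^(2*m) = (4^m)^2 := by rw [← pow_mul, mul_comm]
  rw [this]
  field_simp
  ring

/-- scaled power sums -/
def Sg (a b g d M E O : ℝ) (j : ℕ) : ℝ := (-1)^(j-1) *
  (((-g-b)^j + (-d-b)^j + (a+b)^j - (a-b)^j + (1/2)^j*((-g-d)^j-(a-g)^j-(a-d)^j)) * E
   + ((b+d)^j + (b+g)^j + (1/2)^j*((-g-d)^j-(a-g)^j-(a-d)^j) + (a-b-g-d)^j - (a+b+g+d)^j) * O
   - (a-b)^j * (2*M-1)^j - ((a-g)^j+(a-d)^j) * ((M)^j + (M-1/2)^j)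
   + ((a-b-g-d)^j-(a+b+g+d)^j) * (2*M)^j)

def Psi (a b g d M E1 E2 E3 E4 O1 O2 O3 O4 : ℝ) : ℝ :=
  n4 (1/2) a b g d M * (M*(2*M-1))^4
   + n3 (1/2) a b g d M * (M*(2*M-1))^3 * Sg a b g d M E1 O1 1
   + n2 (1/2) a b g d M * (M*(2*M-1))^2 * ((Sg a b g d M E2 O2 2 + Sg a b g d M E1 O1 1 ^ 2) / 2)
   + n1 (1/2) a b g d M * (M*(2*M-1)) * ((2 * Sg a b g d M E3 O3 3
      + 3 * Sg a b g d M E1 O1 1 * Sg a b g d M E2 O2 2 + Sg a b g d M E1 O1 1 ^ 3) / 6)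
   + n0 (1/2) M * ((6 * Sg a b g d M E4 O4 4 + 8 * Sg a b g d M E1 O1 1 * Sg a b g d M E3 O3 3
      + 3 * Sg a b g d M E2 O2 2 ^ 2 + 6 * Sg a b g d M E1 O1 1 ^ 2 * Sg a b g d M E2 O2 2
      + Sg a b g d M E1 O1 1 ^ 4) / 24)

lemma T4 (a b g d : ℝ) (m : ℕ) (M y : ℝ) (hM : M = (m:ℝ)+1) (hy : y = M*(2*M-1)) :
    coeff 4 (Tf a b g d m) =
    1 / (((2*m).centralBinom : ℝ) * (M^3*4*(2*M-1)^2 * ((4*M-3)*(4*M-1)) * y^4)) *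
     Psi a b g d M (hs 1 1 m * y) (hs 1 2 m * y^2) (hs 1 3 m * y^3) (hs 1 4 m * y^4)
      (hs (1/2) 1 m * y) (hs (1/2) 2 m * y^2) (hs (1/2) 3 m * y^3) (hs (1/2) 4 m * y^4) := by
  obtain ⟨s, hV, hcs⟩ := LD_Vf a b g d m
  have hm : (0:ℝ) ≤ m := by positivity
  have hM0 : M ≠ 0 := by rw [hM]; positivity
  have hw0 : 2*M-1 ≠ 0 := by rw [hM]; intro h; linarith
  have hk0 : 4*M-3 ≠ 0 := by rw [hM]; intro h; linarith
  have hq0 : 4*M-1 ≠ 0 := by rw [hM]; intro h; linarith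
  have hy0 : y ≠ 0 := by rw [hy]; exact mul_ne_zero hM0 hw0
  have hS : ∀ j, coeff j s * y^(j+1) =
      Sg a b g d M (hs 1 (j+1) m * y^(j+1)) (hs (1/2) (j+1) m * y^(j+1)) (j+1) := by
    intro j
    have u1 : (1/((m:ℝ)+1)^(j+1)) * y^(j+1) = (2*M-1)^(j+1) := by
      rw [hy, hM, mul_pow]; field_simp
    have u2 : (1/((m:ℝ)+1/2)^(j+1)) * y^(j+1) = (2*M)^(j+1) := by
      rw [hy, hM, one_div_mul_eq_div, ← div_pow]; congr 1; field_simp; ring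
    have u3 : (1/(2*(m:ℝ)+1)^(j+1)) * y^(j+1) = M^(j+1) := by
      rw [hy, hM, one_div_mul_eq_div, ← div_pow]; congr 1; field_simp; ring
    have u4 : (1/(2*(m:ℝ)+1+1)^(j+1)) * y^(j+1) = (M-1/2)^(j+1) := by
      rw [hy, hM, one_div_mul_eq_div, ← div_pow]; congr 1; field_simp; ring
    rw [hcs, show 2*m+2 = 2*m+1+1 by ring, hs_succ 1 _ m, hs_succ (1/2) _ m, hs_succ 1 _ (2*m+1), hs_succ 1 _ (2*m), hs_double, Sg]
    push_cast
    linear_combination (-1)^j * (-(a-b)^(j+1) * u1 + ((a-b-g-d)^(j+1)-(a+b+g+d)^(j+1)) * u2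
      - ((a-g)^(j+1)+(a-d)^(j+1)) * (u3 + u4))
  have s0 := hS 0
  have s1 := hS 1
  have s2 := hS 2
  have s3 := hS 3
  norm_num only [pow_one] at s0 s1 s2 s3
  have hc : coeff 4 (Vf a b g d m * Nu (1/2) a b g d M) = coeff 0 (Vf a b g d m) * n4 (1/2) a b g d M
      + coeff 1 (Vf a b g d m) * n3 (1/2) a b g d M + coeff 2 (Vf a b g d m) * n2 (1/2) a b g d M
      + coeff 3 (Vf a b g d m) * n1 (1/2) a b g d M + coeff 4 (Vf a b g d m) * n0 (1/2) M := by
    rw [Nu_eq, coeff_mul, Finset.Nat.sum_antidiagonal_eq_sum_range_succ_mk]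
    simp [Finset.sum_range_succ, coeff_C, coeff_X, coeff_X_pow]
  have hB : (((2*m).centralBinom : ℝ)) ≠ 0 := by exact_mod_cast (Nat.centralBinom_pos _).ne'
  rw [Tf_eq, coeff_C_mul, ← hM, hc, LD_coeff1 hV, LD_coeff2 hV, LD_coeff3 hV, LD_coeff4 hV, coeff0_Vf, Psi,
    ← s0, ← s1, ← s2, ← s3, ← hy, show (m:ℝ) = M - 1 by rw [hM]; ring]
  have a1 : M - 1 + 1 = M := by ring
  have a2 : 2*(M-1)+1 = 2*M-1 := by ring
  have a3 : 2*(M-1)+2 = 2*M := by ring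
  have a4 : 4*(M-1)+1 = 4*M-3 := by ring
  have a5 : 4*(M-1)+3 = 4*M-1 := by ring
  rw [a1,a2,a3,a4,a5]
  clear s0 s1 s2 s3 hS hcs hV hc hy hM a1 a2 a3 a4 a5
  generalize n0 (1/2) M = N0
  generalize n1 (1/2) a b g d M = N1
  generalize n2 (1/2) a b g d M = N2
  generalize n3 (1/2) a b g d M = N3
  generalize n4 (1/2) a b g d M = N4
  generalize 2*M-1 = w at *
  generalize 4*M-3 = k at *
  generalize 4*M-1 = q at *
  field_simp
  ring

end
end WZ

namespace WZ
open PowerSeries Finset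

noncomputable section

set_option maxHeartbeats 0 in
lemma big_id (M E1 E2 E3 E4 O1 O2 O3 O4 : ℝ) :
    (1009/33600)*Psi 1 1 (-2) 1 M E1 E2 E3 E4 O1 O2 O3 O4
      + (-1/336)*Psi 2 2 1 1 M E1 E2 E3 E4 O1 O2 O3 O4
      + (-16/945)*Psi 0 (-3) 1 2 M E1 E2 E3 E4 O1 O2 O3 O4
      + (-1/60)*Psi 1 0 1 1 M E1 E2 E3 E4 O1 O2 O3 O4
      + (6107/151200)*Psi 2 2 1 2 M E1 E2 E3 E4 O1 O2 O3 O4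
      + (23/280)*Psi 0 (-2) 1 1 M E1 E2 E3 E4 O1 O2 O3 O4
      + (-6467/302400)*Psi 1 1 1 2 M E1 E2 E3 E4 O1 O2 O3 O4
      + (19/7560)*Psi 1 2 1 1 M E1 E2 E3 E4 O1 O2 O3 O4
      + (-13/1680)*Psi 2 2 (-1) (-1) M E1 E2 E3 E4 O1 O2 O3 O4
      + (-136/945)*Psi 2 2 (-1) 1 M E1 E2 E3 E4 O1 O2 O3 O4
      + (721/7200)*Psi 2 2 (-1) 2 M E1 E2 E3 E4 O1 O2 O3 O4
      + (23/2520)*Psi 2 1 2 (-1) M E1 E2 E3 E4 O1 O2 O3 O4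
      + (229/126)*Psi 1 1 0 0 M E1 E2 E3 E4 O1 O2 O3 O4
      + (4/4725)*Psi 2 1 2 2 M E1 E2 E3 E4 O1 O2 O3 O4
      + (-1151/672)*Psi 1 1 1 0 M E1 E2 E3 E4 O1 O2 O3 O4
      + (13/6300)*Psi 1 (-2) 1 1 M E1 E2 E3 E4 O1 O2 O3 O4
      + (-1/35)*Psi 0 1 0 1 M E1 E2 E3 E4 O1 O2 O3 O4
    = 2*M^3*(2*M-1)*(4*M-1)*((E4-O4)/2-9*M^4) + 1/2*(2*M-1)^3*M^2*((E4-O4)/2-8*M^4+9/16*(2*M-1)^4) := by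
  simp only [Psi, Sg, n0, n1, n2, n3, n4, c0, c1, c2, c3]
  norm_num only
  ring

end
end WZ

namespace WZ
open PowerSeries Finset

noncomputable section

def Comb (m : ℕ) : ℝ :=
    (1009/33600)*coeff 4 (Tf 1 1 (-2) 1 m)
      + (-1/336)*coeff 4 (Tf 2 2 1 1 m)
      + (-16/945)*coeff 4 (Tf 0 (-3) 1 2 m)
      + (-1/60)*coeff 4 (Tf 1 0 1 1 m)
      + (6107/151200)*coeff 4 (Tf 2 2 1 2 m)
      + (23/280)*coeff 4 (Tf 0 (-2) 1 1 m)
      + (-6467/302400)*coeff 4 (Tf 1 1 1 2 m)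
      + (19/7560)*coeff 4 (Tf 1 2 1 1 m)
      + (-13/1680)*coeff 4 (Tf 2 2 (-1) (-1) m)
      + (-136/945)*coeff 4 (Tf 2 2 (-1) 1 m)
      + (721/7200)*coeff 4 (Tf 2 2 (-1) 2 m)
      + (23/2520)*coeff 4 (Tf 2 1 2 (-1) m)
      + (229/126)*coeff 4 (Tf 1 1 0 0 m)
      + (4/4725)*coeff 4 (Tf 2 1 2 2 m)
      + (-1151/672)*coeff 4 (Tf 1 1 1 0 m)
      + (13/6300)*coeff 4 (Tf 1 (-2) 1 1 m)
      + (-1/35)*coeff 4 (Tf 0 1 0 1 m)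

/-- summand of the series -/
def ff (n : ℕ) : ℝ := 1 / (((n:ℝ)+1)^2 * ((2*(n+1)).choose (n+1) : ℝ)) *
        (8 * A 4 (n+1) + (-1:ℝ)^(n+1) / ((n:ℝ)+1)^4)

lemma A_succ (n : ℕ) : A 4 (n+1) = A 4 n + (-1:ℝ)^(n+1) / ((n:ℝ) + 1) ^ 4 := by
  unfold A; rw [Finset.sum_range_succ]

lemma A_even (m : ℕ) : A 4 (2*m) = (hs 1 4 m - hs (1/2) 4 m) / 16 := by
  induction m with
  | zero => simp [A, hs]
  | succ m ih =>
    rw [show 2*(m+1) = 2*m+1+1 by ring, A_succ, A_succ, ih, hs_succ, hs_succ]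
    have h1 : (-1:ℝ)^(2*m+1) = -1 := by rw [pow_succ, pow_mul]; norm_num
    have h2 : (-1:ℝ)^(2*m+1+1) = 1 := by rw [pow_succ, h1]; norm_num
    rw [h1, h2]
    push_cast
    field_simp
    ring

lemma Comb_eq (m : ℕ) : Comb m = ff (2*m) + ff (2*m+1) := by
  have hm : (0:ℝ) ≤ m := by positivity
  set M : ℝ := (m:ℝ)+1 with hM
  have hmm : (m:ℝ) = M - 1 := by rw [hM]; ring
  have hM0 : M ≠ 0 := by positivity
  have hw0 : 2*M-1 ≠ 0 := by rw [hM]; intro h; linarith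
  have hk0 : 4*M-3 ≠ 0 := by rw [hM]; intro h; linarith
  have hq0 : 4*M-1 ≠ 0 := by rw [hM]; intro h; linarith
  have hB : (((2*m).centralBinom : ℝ)) ≠ 0 := by exact_mod_cast (Nat.centralBinom_pos _).ne'
  have h1 : (-1:ℝ)^(2*m+1) = -1 := by rw [pow_succ, pow_mul]; norm_num
  have h2 : (-1:ℝ)^(2*m+1+1) = 1 := by rw [pow_succ, h1]; norm_num
  have b1 : ((2*(2*m+1)).choose (2*m+1) : ℝ) = 2*(4*M-3)/(2*M-1) * ((2*m).centralBinom : ℝ) := by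
    have := Nat.succ_mul_centralBinom_succ (2*m)
    have h : ((2*m+1 : ℕ):ℝ) * ((2*m+1).centralBinom : ℝ) = ((2*(2*(2*m)+1) : ℕ) : ℝ) * ((2*m).centralBinom : ℝ) := by
      exact_mod_cast this
    rw [← Nat.centralBinom_eq_two_mul_choose]
    push_cast at h
    rw [hmm] at h
    field_simp
    linear_combination h
  have b2 : ((2*(2*m+1+1)).choose (2*m+1+1) : ℝ) = 2*(4*M-1)/(2*M) * (2*(4*M-3)/(2*M-1) * ((2*m).centralBinom : ℝ)) := by
    have := Nat.succ_mul_centralBinom_succ (2*m+1)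
    have h : ((2*m+1+1 : ℕ):ℝ) * ((2*m+1+1).centralBinom : ℝ) = ((2*(2*(2*m+1)+1) : ℕ) : ℝ) * ((2*m+1).centralBinom : ℝ) := by
      exact_mod_cast this
    rw [← b1, ← Nat.centralBinom_eq_two_mul_choose, ← Nat.centralBinom_eq_two_mul_choose]
    push_cast at h
    rw [hmm] at h
    field_simp
    linear_combination h/2
  have hbig := big_id M (hs 1 1 m * (M*(2*M-1))) (hs 1 2 m * (M*(2*M-1))^2) (hs 1 3 m * (M*(2*M-1))^3) (hs 1 4 m * (M*(2*M-1))^4)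
      (hs (1/2) 1 m * (M*(2*M-1))) (hs (1/2) 2 m * (M*(2*M-1))^2) (hs (1/2) 3 m * (M*(2*M-1))^3) (hs (1/2) 4 m * (M*(2*M-1))^4)
  unfold Comb
  simp only [fun a b g d => T4 a b g d m M (M*(2*M-1)) hM rfl]
  generalize hD : 1 / (((2*m).centralBinom : ℝ) * (M^3*4*(2*M-1)^2 * ((4*M-3)*(4*M-1)) * (M*(2*M-1))^4)) = D
  refine Eq.trans ?_ (Eq.trans (congrArg (fun t => D * t) hbig) ?_)
  · simp only [mul_add, mul_left_comm]
  · rw [← hD, ff, ff, A_succ (2*m+1), A_succ (2*m), A_even, h1, h2, b1, b2]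
    push_cast
    rw [hmm, show 2*(M-1)+1 = 2*M-1 by ring, show 2*M-1+1 = 2*M by ring]
    generalize hs 1 4 m = e
    generalize hs (1/2) 4 m = o
    generalize ((2*m).centralBinom : ℝ) = B at *
    generalize hw : 2*M-1 = w at *
    generalize hk : 4*M-3 = k at *
    generalize hq : 4*M-1 = q at *
    field_simp
    ring

lemma Comb_tendsto : Tendsto (fun K : ℕ => ∑ m ∈ range K, Comb m) atTop
    (𝓝 (-(22 * (zz 3)^2 / 15) - 97 * Real.pi^6 / 34020)) := by
  have h0 := (TB (a := 1) (x := -2) (y := 1) (by norm_num [abs_le]) (by norm_num [abs_le]) (by norm_num [abs_le]) (by norm_num)).const_mul ((1009/33600):ℝ)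
  have h1 := (TB (a := 2) (x := 1) (y := 1) (by norm_num [abs_le]) (by norm_num [abs_le]) (by norm_num [abs_le]) (by norm_num)).const_mul ((-1/336):ℝ)
  have h2 := (TE (b := -3) (g := 1) (d := 2) (by norm_num [abs_le]) (by norm_num [abs_le]) (by norm_num [abs_le]) (by norm_num)).const_mul ((-16/945):ℝ)
  have h3 := (TG (a := 1) (x := 0) (y := 1) (by norm_num [abs_le]) (by norm_num [abs_le]) (by norm_num [abs_le]) (by norm_num)).const_mul ((-1/60):ℝ)
  have h4 := (TB (a := 2) (x := 1) (y := 2) (by norm_num [abs_le]) (by norm_num [abs_le]) (by norm_num [abs_le]) (by norm_num)).const_mul ((6107/151200):ℝ)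
  have h5 := (TE (b := -2) (g := 1) (d := 1) (by norm_num [abs_le]) (by norm_num [abs_le]) (by norm_num [abs_le]) (by norm_num)).const_mul ((23/280):ℝ)
  have h6 := (TG (a := 1) (x := 1) (y := 2) (by norm_num [abs_le]) (by norm_num [abs_le]) (by norm_num [abs_le]) (by norm_num)).const_mul ((-6467/302400):ℝ)
  have h7 := (TG (a := 1) (x := 2) (y := 1) (by norm_num [abs_le]) (by norm_num [abs_le]) (by norm_num [abs_le]) (by norm_num)).const_mul ((19/7560):ℝ)
  have h8 := (TB (a := 2) (x := -1) (y := -1) (by norm_num [abs_le]) (by norm_num [abs_le]) (by norm_num [abs_le]) (by norm_num)).const_mul ((-13/1680):ℝ)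
  have h9 := (TB (a := 2) (x := -1) (y := 1) (by norm_num [abs_le]) (by norm_num [abs_le]) (by norm_num [abs_le]) (by norm_num)).const_mul ((-136/945):ℝ)
  have h10 := (TB (a := 2) (x := -1) (y := 2) (by norm_num [abs_le]) (by norm_num [abs_le]) (by norm_num [abs_le]) (by norm_num)).const_mul ((721/7200):ℝ)
  have h11 := (TG (a := 2) (x := 1) (y := -1) (by norm_num [abs_le]) (by norm_num [abs_le]) (by norm_num [abs_le]) (by norm_num)).const_mul ((23/2520):ℝ)
  have h12 := (TB (a := 1) (x := 0) (y := 0) (by norm_num [abs_le]) (by norm_num [abs_le]) (by norm_num [abs_le]) (by norm_num)).const_mul ((229/126):ℝ)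
  have h13 := (TG (a := 2) (x := 1) (y := 2) (by norm_num [abs_le]) (by norm_num [abs_le]) (by norm_num [abs_le]) (by norm_num)).const_mul ((4/4725):ℝ)
  have h14 := (TG (a := 1) (x := 1) (y := 0) (by norm_num [abs_le]) (by norm_num [abs_le]) (by norm_num [abs_le]) (by norm_num)).const_mul ((-1151/672):ℝ)
  have h15 := (TG (a := 1) (x := -2) (y := 1) (by norm_num [abs_le]) (by norm_num [abs_le]) (by norm_num [abs_le]) (by norm_num)).const_mul ((13/6300):ℝ)
  have h16 := (TG (a := 0) (x := 1) (y := 1) (by norm_num [abs_le]) (by norm_num [abs_le]) (by norm_num [abs_le]) (by norm_num)).const_mul ((-1/35):ℝ)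
  have H := (((((((((((((((h0.add h1).add h2).add h3).add h4).add h5).add h6).add h7).add h8).add h9).add h10).add h11).add h12).add h13).add h14).add h15).add h16
  have hv : (1009/33600)*om 1 (-2) 1
     + (-1/336)*om 2 1 1
     + (-16/945)*(2 * ((-3)*1+(-3)*2+1*2)^2 * zz 6)
     + (-1/60)*om 1 0 1
     + (6107/151200)*om 2 1 2
     + (23/280)*(2 * ((-2)*1+(-2)*1+1*1)^2 * zz 6)
     + (-6467/302400)*om 1 1 2
     + (19/7560)*om 1 2 1
     + (-13/1680)*om 2 (-1) (-1)
     + (-136/945)*om 2 (-1) 1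
     + (721/7200)*om 2 (-1) 2
     + (23/2520)*om 2 1 (-1)
     + (229/126)*om 1 0 0
     + (4/4725)*om 2 1 2
     + (-1151/672)*om 1 1 0
     + (13/6300)*om 1 (-2) 1
     + (-1/35)*om 0 1 1
      = -(22 * (zz 3)^2 / 15) - 97 * Real.pi^6 / 34020 := by
    simp only [om, sg, pj, qj, zz2, zz4, zz6]
    norm_num only
    ring
  rw [hv] at H
  refine H.congr fun K => ?_
  unfold Comb
  simp only [Finset.sum_add_distrib, Finset.mul_sum]

lemma A_bound (n : ℕ) : |A 4 n| ≤ 2 := by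
  have h : ∀ n : ℕ, |A 4 n| ≤ 2 - 1/((n:ℝ)+1) := by
    intro n
    induction n with
    | zero => simp [A]
    | succ n ih =>
      rw [A_succ]
      refine (abs_add_le _ _).trans ?_
      have h1 : |(-1:ℝ)^(n+1) / ((n:ℝ) + 1) ^ 4| = 1 / ((n:ℝ) + 1) ^ 4 := by
        rw [abs_div, abs_pow, abs_neg, abs_one, one_pow, abs_of_pos (by positivity)]
      rw [h1]
      rcases n with _ | n
      · norm_num [A]
      · have h2 : 1 / (((n+1:ℕ):ℝ) + 1) ^ 4 ≤ 1 / (((n+1:ℕ):ℝ)+1) - 1 / (((n+1+1:ℕ):ℝ) + 1) := by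
          push_cast
          rw [div_sub_div _ _ (by positivity) (by positivity), div_le_div_iff₀ (by positivity) (by positivity)]
          have : (0:ℝ) ≤ n := by positivity
          generalize (n:ℝ) = x at *
          nlinarith [pow_nonneg this 2, pow_nonneg this 3, pow_nonneg this 4]
        linarith
  refine (h n).trans ?_
  have : 0 ≤ 1/((n:ℝ)+1) := by positivity
  linarith

lemma ff_zero : Tendsto ff atTop (𝓝 0) := by
  have h1 : Tendsto (fun n : ℕ => 17 * (1 / ((n:ℝ)+1))) atTop (𝓝 0) := by
    simpa using (tendsto_one_div_add_atTop_nhds_zero_nat (𝕜 := ℝ)).const_mul 17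
  refine squeeze_zero_norm (fun n => ?_) h1
  rw [Real.norm_eq_abs, ff, abs_mul, mul_comm]
  have hc : (1:ℝ) ≤ ((2*(n+1)).choose (n+1) : ℝ) := by
    exact_mod_cast Nat.choose_pos (by omega)
  have hn : (1:ℝ) ≤ (n:ℝ)+1 := by have : (0:ℝ) ≤ n := by positivity
                                  linarith
  refine mul_le_mul ?_ ?_ (abs_nonneg _) (by norm_num)
  · refine (abs_add_le _ _).trans ?_
    have h2 : |(-1:ℝ)^(n+1) / ((n:ℝ) + 1) ^ 4| ≤ 1 := by
      rw [abs_div, abs_pow, abs_neg, abs_one, one_pow, abs_of_pos (by positivity : 0 < ((n:ℝ)+1)^4)]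
      rw [div_le_one (by positivity)]
      exact one_le_pow₀ hn
    rw [abs_mul]
    have := A_bound (n+1)
    norm_num
    linarith
  · rw [abs_of_nonneg (by positivity)]
    refine one_div_le_one_div_of_le (by positivity) ?_
    nlinarith

theorem main : Tendsto (fun N => ∑ n ∈ range N, ff n) atTop
    (𝓝 (-(22 * (zz 3)^2 / 15) - 97 * Real.pi^6 / 34020)) := by
  have he : Tendsto (fun K : ℕ => ∑ n ∈ range (2*K), ff n) atTop
      (𝓝 (-(22 * (zz 3)^2 / 15) - 97 * Real.pi^6 / 34020)) := by
    refine Comb_tendsto.congr fun K => ?_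
    induction K with
    | zero => simp
    | succ K ih =>
      rw [Finset.sum_range_succ, ih, show 2*(K+1) = 2*K+1+1 by ring, Finset.sum_range_succ, Finset.sum_range_succ, Comb_eq]
      ring
  have ho : Tendsto (fun K : ℕ => ∑ n ∈ range (2*K+1), ff n) atTop
      (𝓝 (-(22 * (zz 3)^2 / 15) - 97 * Real.pi^6 / 34020)) := by
    have h2 : Tendsto (fun K : ℕ => 2*K) atTop atTop :=
      tendsto_atTop_mono (fun K => by show K ≤ 2*K; omega) tendsto_id
    have := he.add (ff_zero.comp h2)
    rw [add_zero] at this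
    refine this.congr fun K => ?_
    rw [Finset.sum_range_succ]; rfl
  rw [Metric.tendsto_atTop] at *
  intro ε hε
  obtain ⟨N1, h1⟩ := he ε hε
  obtain ⟨N2, h2⟩ := ho ε hε
  refine ⟨2*(N1+N2)+2, fun n hn => ?_⟩
  rcases Nat.even_or_odd' n with ⟨k, rfl | rfl⟩
  · exact h1 k (by omega)
  · exact h2 k (by omega)

end
end WZ

theorem stmt_13 :
    Tendsto (fun N => ∑ n ∈ Finset.range N,
      1 / (((n:ℝ)+1)^2 * ((2*(n+1)).choose (n+1) : ℝ)) *
        (8 * A 4 (n+1) + (-1:ℝ)^(n+1) / ((n:ℝ)+1)^4))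
      atTop (𝓝 (-(22 * (zeta 3)^2 / 15) - 97 * Real.pi^6 / 34020)) := by
  exact WZ.main
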